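/- arXiv:2101.01458 — 6 statements merged into one kernel-verified Lean document; each statement's English description precedes it below -/
import Mathlib

section
/- Let $G$ be an infinite countable discrete group, $\mathcal{T}$ a finite tiling of $G$ with set of shapes $\mathcal{S}_{\mathcal{T}}$, and set $K = \bigcup_{S \in \mathcal{S}_{\mathcal{T}}} S$. Then for every $g \in G$ and every nonempty finite subset $F$ of $G$, $F \setminus K B(F,K) \subset \bigcup_{T \in \mathcal{T}g,\, T \subset F} T$; that is, every element of $F$ not belonging to $K B(F,K)$ lies in some $\mathcal{T}g$-tile entirely contained in $F$. -/
open Set Filter Topology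
open scoped ENNReal NNReal symmDiff

/-- Right translate `S·c = {s * c : s ∈ S}` of a subset of a group. -/
def rightTranslate {G : Type*} [Group G] (S : Set G) (c : G) : Set G := (fun s => s * c) '' S

/-- The boundary set `B(F,T) = {g ∈ G : Tg ∩ F ≠ ∅ and Tg ∩ (G \ F) ≠ ∅}`. -/
def Bset {G : Type*} [Group G] (F T : Set G) : Set G :=
  {g : G | (rightTranslate T g ∩ F).Nonempty ∧ (rightTranslate T g ∩ Fᶜ).Nonempty}

/-- `F` is `(T,ε)`-invariant: `|B(F,T)| < ε * |F|`. -/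
def IsInvariantSet {G : Type*} [Group G] (F T : Set G) (ε : ℝ) : Prop :=
  ((Bset F T).ncard : ℝ) < ε * (F.ncard : ℝ)

/-- A Følner sequence of nonempty finite subsets of `G`. -/
def IsFolnerSeq {G : Type*} [Group G] (F : ℕ → Set G) : Prop :=
  (∀ n, (F n).Finite ∧ (F n).Nonempty) ∧
    ∀ g : G, Tendsto
      (fun n => ((symmDiff (F n) ((fun x => g * x) '' (F n))).ncard : ℝ) / ((F n).ncard : ℝ))
      atTop (nhds 0)

/-- A countable discrete group is amenable if it admits a Følner sequence. -/
def AmenableGroup (G : Type*) [Group G] : Prop := ∃ F : ℕ → Set G, IsFolnerSeq F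

/-- A tiling of `G`: pairwise disjoint nonempty finite subsets covering `G`. -/
def IsTilingOf {G : Type*} [Group G] (𝒯 : Set (Set G)) : Prop :=
  (∀ T ∈ 𝒯, T.Finite ∧ T.Nonempty) ∧
    (∀ T ∈ 𝒯, ∀ T' ∈ 𝒯, T ≠ T' → Disjoint T T') ∧ ⋃₀ 𝒯 = Set.univ

/-- `𝒮` is a (finite) set of shapes for the tiling `𝒯`. -/
def IsShapeSet {G : Type*} [Group G] (𝒯 𝒮 : Set (Set G)) : Prop :=
  𝒮.Finite ∧ (∀ S ∈ 𝒮, S.Finite ∧ S.Nonempty) ∧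
    ∀ T ∈ 𝒯, ∃ S ∈ 𝒮, ∃ c : G, T = rightTranslate S c

/-- The center of a shape `S` relative to a tiling `𝒯`. -/
def center {G : Type*} [Group G] (𝒯 : Set (Set G)) (S : Set G) : Set G :=
  {c : G | rightTranslate S c ∈ 𝒯}

/-- A syndetic subset: `G = F·A` for some finite `F`. -/
def SyndeticSet {G : Type*} [Group G] (A : Set G) : Prop :=
  ∃ F : Set G, F.Finite ∧ Set.image2 (· * ·) F A = Set.univ

/-- The translation `𝒯g = {Tg : T ∈ 𝒯}` of a tiling. -/
def tilingTranslate {G : Type*} [Group G] (𝒯 : Set (Set G)) (g : G) : Set (Set G) :=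
  (fun T => rightTranslate T g) '' 𝒯

/-- The restriction `𝒯|_F = {T ∩ F : T ∈ 𝒯}`. -/
def tilingRestrict {G : Type*} [Group G] (𝒯 : Set (Set G)) (F : Set G) : Set (Set G) :=
  (fun T => T ∩ F) '' 𝒯

/-- The full `G`-shift: `(σ_g x)_h = x_{hg}`. -/
def shift {G K : Type*} [Group G] (g : G) (x : G → K) : G → K := fun h => x (h * g)

/-- A subshift: a closed shift-invariant subset of `K^G`. -/
def IsSubshift {G : Type*} (K : Type*) [Group G] [TopologicalSpace K]
    (X : Set (G → K)) : Prop :=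
  IsClosed X ∧ ∀ g : G, ∀ x ∈ X, shift g x ∈ X

/-- A weight `α : G → (0,∞)` with `α e = 1` and `∑ α < ∞`, defining the product metric. -/
def IsGoodWeight {G : Type*} [Group G] (α : G → ℝ) : Prop :=
  α 1 = 1 ∧ (∀ g, 0 < α g) ∧ Summable α

/-- The metric `ρ(x,y) = ∑_g α_g d(x_g, y_g)` on `K^G`. -/
noncomputable def rhoMetric {G K : Type*} [Group G] [PseudoMetricSpace K] (α : G → ℝ)
    (x y : G → K) : ℝ :=
  ∑' g : G, α g * dist (x g) (y g)

/-- `ρ_F(x,y) = max_{g ∈ F} ρ(gx, gy)` for finite `F ⊆ G`. -/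
noncomputable def rhoMetricF {G K : Type*} [Group G] [PseudoMetricSpace K] (α : G → ℝ)
    (F : Set G) (x y : G → K) : ℝ :=
  sSup ((fun g => rhoMetric α (shift g x) (shift g y)) '' F)

/-- `d_F(x,y) = max_{g∈F} d(gx, gy)` for an action `φ`. -/
noncomputable def dynDist {G X : Type*} [Group G] [PseudoMetricSpace X]
    (φ : G → X → X) (F : Set G) (x y : X) : ℝ :=
  sSup ((fun g => dist (φ g x) (φ g y)) '' F)

/-- An `ε`-embedding w.r.t. `ρ`: continuous, and `f x = f y → ρ x y < ε`. -/
def IsEpsEmb {X Y : Type*} [TopologicalSpace X] [TopologicalSpace Y]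
    (ρ : X → X → ℝ) (ε : ℝ) (f : X → Y) : Prop :=
  Continuous f ∧ ∀ x y, f x = f y → ρ x y < ε

/-- `Widim_ε(X,ρ) ≤ n`: there is an `ε`-embedding of `X` into (the geometric realization of)
a finite simplicial complex all of whose faces have at most `n+1` vertices. -/
def WidimLE (X : Type*) [TopologicalSpace X] (ρ : X → X → ℝ) (ε : ℝ) (n : ℕ) : Prop :=
  ∃ (N : ℕ) (P : Geometry.SimplicialComplex ℝ (Fin N → ℝ)),
    P.faces.Finite ∧ (∀ s ∈ P.faces, s.card ≤ n + 1) ∧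
      ∃ f : X → P.space, IsEpsEmb ρ ε f

/-- `Widim_ε(X,ρ)`: the minimum dimension of a polyhedron admitting an `ε`-embedding of `X`. -/
noncomputable def widim (X : Type*) [TopologicalSpace X] (ρ : X → X → ℝ) (ε : ℝ) : ℕ∞ :=
  sInf {n : ℕ∞ | ∃ m : ℕ, n = (m : ℕ∞) ∧ WidimLE X ρ ε m}

/-- Covering dimension `≤ n`: every open cover admits an open refinement of multiplicity `≤ n+1`. -/
def DimLE (X : Type*) [TopologicalSpace X] (n : ℕ) : Prop :=
  ∀ 𝒰 : Set (Set X), (∀ U ∈ 𝒰, IsOpen U) → ⋃₀ 𝒰 = Set.univ →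
    ∃ 𝒱 : Set (Set X), (∀ V ∈ 𝒱, IsOpen V) ∧ ⋃₀ 𝒱 = Set.univ ∧
      (∀ V ∈ 𝒱, ∃ U ∈ 𝒰, V ⊆ U) ∧
      ∀ x : X, ({V ∈ 𝒱 | x ∈ V}).Finite ∧ ({V ∈ 𝒱 | x ∈ V}).ncard ≤ n + 1

/-- Topological (covering) dimension, valued in `ℕ∞`. -/
noncomputable def covDim (X : Type*) [TopologicalSpace X] : ℕ∞ :=
  sInf {n : ℕ∞ | ∃ m : ℕ, n = (m : ℕ∞) ∧ DimLE X m}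

/-- Mean dimension of the action `φ` computed along the Følner sequence `F`
(as `sup_{ε>0} limsup_n Widim_ε(X, d_{F_n}) / |F_n|`). -/
noncomputable def mdimAlong {G X : Type*} [Group G] [PseudoMetricSpace X]
    (φ : G → X → X) (F : ℕ → Set G) : ℝ≥0∞ :=
  ⨆ ε : {ε : ℝ // 0 < ε}, Filter.limsup
    (fun n => ((widim X (dynDist φ (F n)) ε.1 : ℕ∞) : ℝ≥0∞) / ((F n).ncard : ℝ≥0∞)) atTop

/-- Mean dimension of a subshift `X ⊆ K^G` computed along the Følner sequence `F`,
with the metric `ρ` induced by the weight `α`. -/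
noncomputable def mdimSubshift {G K : Type*} [Group G] [PseudoMetricSpace K] (α : G → ℝ)
    (X : Set (G → K)) (F : ℕ → Set G) : ℝ≥0∞ :=
  ⨆ ε : {ε : ℝ // 0 < ε}, Filter.limsup
    (fun n => ((widim X (fun x y : X => rhoMetricF α (F n) x.1 y.1) ε.1 : ℕ∞) : ℝ≥0∞) /
      ((F n).ncard : ℝ≥0∞)) atTop

/-- The canonical projection `π_F : K^G → K^F`. -/
def projTo {G K : Type*} (F : Set G) (x : G → K) : F → K := fun g => x g.1

/-- The tripod (cone over three points), realized as the subset of `ℝ³` of points with at most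
one nonzero coordinate, each coordinate lying in `[0,1]`; the ℓ¹-distance on this set is exactly
the graph distance in which each of the three edges has length one. -/
def TripodSet : Set (Fin 3 → ℝ) :=
  {x | (∀ i, x i ∈ Set.Icc (0 : ℝ) 1) ∧ ∀ i j : Fin 3, i ≠ j → x i = 0 ∨ x j = 0}

/-- The graph distance on the tripod (= the ℓ¹-distance of the ambient `ℝ³`). -/
noncomputable def tripodDist (x y : TripodSet) : ℝ := ∑ i, |x.1 i - y.1 i|

/-- The `l^∞`-distance on `P^n` for the tripod `P`. -/
noncomputable def tripodDistInf {n : ℕ} (x y : Fin n → TripodSet) : ℝ :=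
  sSup (Set.range fun i => tripodDist (x i) (y i))

/-- **Claim.** Let `𝒯` be a finite tiling of `G` with shape set `𝒮` and put `K = ⋃ 𝒮`. Then
for every `g ∈ G` and every nonempty finite `F ⊆ G`, every element of `F` not in `K·B(F,K)`
lies in some `𝒯g`-tile entirely contained in `F`. -/
theorem sdiff_subset_union_of_inner_tiles (G : Type*) [Group G] [Countable G] [Infinite G]
    (𝒯 𝒮 : Set (Set G)) (ht : IsTilingOf 𝒯) (hs : IsShapeSet 𝒯 𝒮)
    (g : G) (F : Set G) (hF : F.Finite) (hFne : F.Nonempty) :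
    F \ Set.image2 (· * ·) (⋃₀ 𝒮) (Bset F (⋃₀ 𝒮)) ⊆
      ⋃₀ {T' ∈ tilingTranslate 𝒯 g | T' ⊆ F} := by
  rintro x ⟨hxF, hx⟩
  have hu : x * g⁻¹ ∈ ⋃₀ 𝒯 := by rw [ht.2.2]; trivial
  obtain ⟨T, hT, hxT⟩ := hu
  refine ⟨rightTranslate T g, ⟨⟨T, hT, rfl⟩, ?_⟩, ⟨x * g⁻¹, hxT, by simp⟩⟩
  obtain ⟨S, hS, c, rfl⟩ := hs.2.2 T hT
  obtain ⟨s, hsS, hsx⟩ := hxT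
  have hsx' : s * (c * g) = x := by
    rw [← mul_assoc]
    exact eq_mul_inv_iff_mul_eq.mp hsx
  rintro y ⟨_, ⟨s', hs', rfl⟩, rfl⟩
  by_contra hy
  refine hx ⟨s, ⟨S, hS, hsS⟩, c * g, ⟨⟨x, ⟨s, ⟨S, hS, hsS⟩, hsx'⟩, hxF⟩,
    ⟨s' * c * g, ⟨s', ⟨S, hS, hs'⟩, (mul_assoc _ _ _).symm⟩, hy⟩⟩, hsx'⟩
end

section
/- Let $G$ be an infinite countable discrete group, $\mathcal{T}$ a syndetic finite tiling of $G$ with set of shapes $\mathcal{S}_{\mathcal{T}}$, where every shape contains the identity element $e$. Then there exist a nonempty finite subset $K'$ of $G$ and $\epsilon' > 0$ such that every $(K',\epsilon')$-invariant nonempty finite subset $F$ of $G$ contains, for each shape $S \in \mathcal{S}_{\mathcal{T}}$, at least one $\mathcal{T}$-tile of the shape $S$ (i.e., there is $c \in C(S)$ with $Sc \subset F$). -/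
open Set Filter Topology
open scoped ENNReal NNReal symmDiff

/-- **Claim.** Let `𝒯` be a syndetic finite tiling of `G` with shape set `𝒮` such that every
shape contains the identity. Then there exist a nonempty finite `K' ⊆ G` and `ε' > 0` such that
every `(K',ε')`-invariant nonempty finite subset of `G` contains a `𝒯`-tile of each shape. -/
theorem invariant_set_contains_tile_of_each_shape (G : Type*) [Group G] [Countable G]
    [Infinite G] (𝒯 𝒮 : Set (Set G)) (ht : IsTilingOf 𝒯) (hs : IsShapeSet 𝒯 𝒮)
    (hsyn : ∀ S ∈ 𝒮, SyndeticSet (center 𝒯 S)) (hone : ∀ S ∈ 𝒮, (1 : G) ∈ S) :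
    ∃ K' : Set G, K'.Finite ∧ K'.Nonempty ∧ ∃ ε' > (0 : ℝ), ∀ F : Set G,
      F.Finite → F.Nonempty → IsInvariantSet F K' ε' →
        ∀ S ∈ 𝒮, ∃ c ∈ center 𝒯 S, rightTranslate S c ⊆ F := by
  classical
  choose! E hE hEc using hsyn
  refine ⟨insert 1 (⋃ S ∈ 𝒮, Set.image2 (fun s f => s * f⁻¹) S (E S)), ?_, ⟨1, by simp⟩,
    1, one_pos, ?_⟩
  · refine Set.Finite.insert _ (hs.1.biUnion fun S hS => ?_)
    exact Set.Finite.image2 _ (hs.2.1 S hS).1 (hE S hS)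
  have hK : (insert 1 (⋃ S ∈ 𝒮, Set.image2 (fun s f => s * f⁻¹) S (E S)) : Set G).Finite := by
    refine Set.Finite.insert _ (hs.1.biUnion fun S hS => ?_)
    exact Set.Finite.image2 _ (hs.2.1 S hS).1 (hE S hS)
  intro F hF _ hinv S hS
  set K : Set G := insert 1 (⋃ S ∈ 𝒮, Set.image2 (fun s f => s * f⁻¹) S (E S)) with hKdef
  have hBfin : (Bset F K).Finite := by
    refine (Set.Finite.image2 (fun k f => k⁻¹ * f) hK hF).subset ?_
    rintro g ⟨⟨x, ⟨k, hk, rfl⟩, hx⟩, _⟩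
    exact ⟨k, hk, k * g, hx, by simp⟩
  have hlt : (Bset F K).ncard < F.ncard := by
    have h := hinv
    unfold IsInvariantSet at h
    rw [one_mul] at h
    exact_mod_cast h
  obtain ⟨g, hgF, hgB⟩ : ∃ g ∈ F, g ∉ Bset F K := by
    by_contra! hcon
    exact absurd (Set.ncard_le_ncard hcon hBfin) (not_le.mpr hlt)
  have hKg : ∀ k ∈ K, k * g ∈ F := by
    intro k hk
    by_contra hkF
    exact hgB ⟨⟨g, ⟨1, by simp [hKdef], by simp⟩, hgF⟩, ⟨k * g, ⟨k, hk, rfl⟩, hkF⟩⟩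
  have hg : g ∈ Set.image2 (· * ·) (E S) (center 𝒯 S) := by
    rw [hEc S hS]; trivial
  obtain ⟨f, hf, c, hc, hfc⟩ := hg
  refine ⟨c, hc, ?_⟩
  rintro _ ⟨s, hs', rfl⟩
  have := hKg (s * f⁻¹) (Set.mem_insert_of_mem _ (Set.mem_biUnion hS ⟨s, hs', f, hf, rfl⟩))
  have hfc' : f * c = g := hfc
  rw [← hfc'] at this
  simpa [mul_assoc] using this
end

section
/- Let $G$ be an infinite countable discrete group, $K$ a finite dimensional compact metric space, $(X,\sigma)$ a subshift of $(K^G,\sigma)$, and $\epsilon > 0$. Let $A$ be a finite subset of $G$ containing the identity element such that for all $x, y \in K^G$, $x|_A = y|_A$ implies $\rho(x,y) < \epsilon$. Then for every nonempty finite subset $F$ of $G$: (i) the restriction of the projection $\pi_{AF}$ to $X$ is an $\epsilon$-embedding of $(X, \rho_F)$ into $K^{AF}$, hence $\mathrm{Widim}_\epsilon(X,\rho_F) \le \dim(\pi_{AF}(X))$; and (ii) $\dim(\pi_{AF}(X)) \le \dim(\pi_F(X)) + |AF \setminus F| \cdot \dim(K)$, so $\mathrm{Widim}_\epsilon(X,\rho_F)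 \le \dim(\pi_F(X)) + |AF \setminus F| \cdot \dim(K)$, where $\dim$ denotes topological (covering) dimension. -/
open Set Filter Topology
open scoped ENNReal NNReal symmDiff

/-! ### Indexed refinements -/

theorem dimLE_indexed {X : Type*} [TopologicalSpace X] {n : ℕ} (h : DimLE X n) {ι : Type*}
    (C : ι → Set X) (hC : ∀ i, IsOpen (C i)) (hcov : ∀ x, ∃ i, x ∈ C i) :
    ∃ V : ι → Set X, (∀ i, IsOpen (V i)) ∧ (∀ i, V i ⊆ C i) ∧ (∀ x, ∃ i, x ∈ V i) ∧
      ∀ x, {i | x ∈ V i}.Finite ∧ {i | x ∈ V i}.ncard ≤ n + 1 := by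
  obtain ⟨𝒱, hVo, hVc, hVr, hVm⟩ := h (range C) (by rintro _ ⟨i, rfl⟩; exact hC i)
    (by
      rw [eq_univ_iff_forall]
      intro x
      obtain ⟨i, hi⟩ := hcov x
      exact ⟨C i, ⟨i, rfl⟩, hi⟩)
  have : ∀ V : 𝒱, ∃ i, V.1 ⊆ C i := by
    rintro ⟨V, hV⟩
    obtain ⟨_, ⟨i, rfl⟩, hi⟩ := hVr V hV
    exact ⟨i, hi⟩
  choose r hr using this
  refine ⟨fun i => ⋃ V : {V : 𝒱 // r V = i}, V.1.1, ?_, ?_, ?_, ?_⟩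
  · intro i
    exact isOpen_iUnion fun V => hVo _ V.1.2
  · intro i
    refine iUnion_subset ?_
    rintro ⟨V, rfl⟩
    exact hr V
  · intro x
    have hx : x ∈ ⋃₀ 𝒱 := by rw [hVc]; trivial
    obtain ⟨V, hV, hxV⟩ := hx
    exact ⟨r ⟨V, hV⟩, mem_iUnion.2 ⟨⟨⟨V, hV⟩, rfl⟩, hxV⟩⟩
  · intro x
    obtain ⟨hf, hc⟩ := hVm x
    have hfin : {V : 𝒱 | x ∈ V.1}.Finite := by
      refine Set.Finite.of_finite_image (f := Subtype.val) (hf.subset ?_)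
        Subtype.val_injective.injOn
      rintro _ ⟨V, hV, rfl⟩
      exact ⟨V.2, hV⟩
    have hcard : {V : 𝒱 | x ∈ V.1}.ncard ≤ n + 1 := by
      rw [← Set.ncard_image_of_injective _ Subtype.val_injective]
      refine (Set.ncard_le_ncard ?_ hf).trans hc
      rintro _ ⟨V, hV, rfl⟩
      exact ⟨V.2, hV⟩
    have hsub : {i | x ∈ ⋃ V : {V : 𝒱 // r V = i}, V.1.1} ⊆ r '' {V : 𝒱 | x ∈ V.1} := by
      intro i hi
      obtain ⟨⟨V, hV⟩, hx⟩ := mem_iUnion.1 hi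
      exact ⟨V, hx, hV⟩
    exact ⟨(hfin.image r).subset hsub, ((Set.ncard_le_ncard hsub (hfin.image r)).trans
      (Set.ncard_image_le hfin)).trans hcard⟩

theorem dimLE_of_indexed {X : Type*} [TopologicalSpace X] {n : ℕ}
    (h : ∀ 𝒰 : Set (Set X), (∀ U ∈ 𝒰, IsOpen U) → ⋃₀ 𝒰 = Set.univ →
      ∃ (ι : Type) (V : ι → Set X), (∀ i, IsOpen (V i)) ∧ (∀ i, ∃ U ∈ 𝒰, V i ⊆ U) ∧
        (∀ x, ∃ i, x ∈ V i) ∧ ∀ x, {i | x ∈ V i}.Finite ∧ {i | x ∈ V i}.ncard ≤ n + 1) :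
    DimLE X n := by
  intro 𝒰 ho hc
  obtain ⟨ι, V, hVo, hVU, hVc, hVm⟩ := h 𝒰 ho hc
  refine ⟨range V, ?_, ?_, ?_, ?_⟩
  · rintro _ ⟨i, rfl⟩; exact hVo i
  · rw [eq_univ_iff_forall]
    intro x
    obtain ⟨i, hi⟩ := hVc x
    exact ⟨V i, ⟨i, rfl⟩, hi⟩
  · rintro _ ⟨i, rfl⟩; exact hVU i
  · intro x
    obtain ⟨hf, hm⟩ := hVm x
    have hsub : {W ∈ range V | x ∈ W} ⊆ V '' {i | x ∈ V i} := by
      rintro _ ⟨⟨i, rfl⟩, hx⟩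
      exact ⟨i, hx, rfl⟩
    exact ⟨(hf.image V).subset hsub, ((Set.ncard_le_ncard hsub (hf.image V)).trans
      (Set.ncard_image_le hf)).trans hm⟩

theorem dimLE_of_embedding {X Y : Type*} [TopologicalSpace X] [TopologicalSpace Y]
    {n : ℕ} {f : X → Y} (hf : IsClosedEmbedding f) (h : DimLE Y n) : DimLE X n := by
  intro 𝒰 ho hc
  have h1 : ∀ U : 𝒰, ∃ O : Set Y, IsOpen O ∧ f ⁻¹' O = U.1 := fun U =>
    hf.isInducing.isOpen_iff.1 (ho _ U.2)
  choose O hO hOU using h1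
  obtain ⟨V, hVo, hVC, hVc, hVm⟩ := dimLE_indexed h
    (fun o : Option 𝒰 => Option.casesOn o (range f)ᶜ O)
    (by
      rintro (_ | U)
      · exact hf.isClosed_range.isOpen_compl
      · exact hO U)
    (by
      intro y
      by_cases hy : y ∈ range f
      · obtain ⟨x, rfl⟩ := hy
        have hx : x ∈ ⋃₀ 𝒰 := by rw [hc]; trivial
        obtain ⟨U, hU, hxU⟩ := hx
        refine ⟨some ⟨U, hU⟩, ?_⟩
        change x ∈ f ⁻¹' (O ⟨U, hU⟩)
        rw [hOU]; exact hxU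
      · exact ⟨none, hy⟩)
  refine ⟨range fun U : 𝒰 => f ⁻¹' V (some U), ?_, ?_, ?_, ?_⟩
  · rintro _ ⟨U, rfl⟩
    exact (hVo _).preimage hf.continuous
  · rw [eq_univ_iff_forall]
    intro x
    obtain ⟨o, ho'⟩ := hVc (f x)
    rcases o with _ | U
    · exact absurd ⟨x, rfl⟩ (hVC none ho')
    · exact ⟨_, ⟨U, rfl⟩, ho'⟩
  · rintro _ ⟨U, rfl⟩
    refine ⟨U.1, U.2, ?_⟩
    rw [← hOU U]
    exact preimage_mono (hVC (some U))
  · intro x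
    obtain ⟨hfi, hm⟩ := hVm (f x)
    have hsub : {W ∈ range (fun U : 𝒰 => f ⁻¹' V (some U)) | x ∈ W} ⊆
        (fun o => f ⁻¹' V o) '' {i | f x ∈ V i} := by
      rintro _ ⟨⟨i, rfl⟩, hx⟩
      exact ⟨some i, hx, rfl⟩
    exact ⟨(hfi.image _).subset hsub, ((Set.ncard_le_ncard hsub (hfi.image _)).trans
      (Set.ncard_image_le hfi)).trans hm⟩

theorem exists_pou {X ι : Type*} [TopologicalSpace X] [NormalSpace X] [Fintype ι]
    (V : ι → Set X) (hV : ∀ i, IsOpen (V i)) (hcov : ∀ x, ∃ i, x ∈ V i) :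
    ∃ φ : ι → X → ℝ, (∀ i, Continuous (φ i)) ∧ (∀ i x, 0 ≤ φ i x) ∧ (∀ x, ∑ i, φ i x = 1) ∧
      ∀ i x, 0 < φ i x → x ∈ V i := by
  obtain ⟨f, hf⟩ := PartitionOfUnity.exists_isSubordinate_of_locallyFinite
    (s := (univ : Set X)) isClosed_univ V hV (locallyFinite_of_finite V)
    (fun x _ => mem_iUnion.2 (hcov x))
  refine ⟨fun i => f i, fun i => (f i).continuous, fun i x => f.nonneg i x, fun x => ?_, ?_⟩
  · rw [← finsum_eq_sum_of_fintype]
    exact f.sum_eq_one (mem_univ x)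
  · intro i x hx
    exact hf i (subset_closure hx.ne')

/-! ### Kolmogorov and Ostrand coloured refinements -/

theorem colored_base {X ι : Type*} [TopologicalSpace X] [NormalSpace X] [Fintype ι] {n : ℕ}
    (h : DimLE X n) (C : ι → Set X) (hC : ∀ i, IsOpen (C i)) (hcov : ∀ x, ∃ i, x ∈ C i) :
    ∃ U : ℕ → ι → Set X, (∀ i j, IsOpen (U i j)) ∧ (∀ i j, U i j ⊆ C j) ∧
      (∀ i j j' x, x ∈ U i j → x ∈ U i j' → j = j') ∧
      ∀ x, ∃ S : Finset ℕ, S ⊆ Finset.range (n + 1) ∧ 1 ≤ S.card ∧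
        ∀ i ∈ S, ∃ j, x ∈ U i j := by
  classical
  obtain ⟨V, hVo, hVC, hVc, hVm⟩ := dimLE_indexed h C hC hcov
  obtain ⟨φ, hφc, hφ0, hφ1, hφV⟩ := exists_pou V hVo hVc
  have hch : ∀ S : Finset ι, ∃ j : Option ι, S.Nonempty → ∃ i ∈ S, j = some i := by
    intro S
    by_cases hS : S.Nonempty
    · obtain ⟨i, hi⟩ := hS
      exact ⟨some i, fun _ => ⟨i, hi, rfl⟩⟩
    · exact ⟨none, fun h => absurd h hS⟩
  choose c hc using hch
  let W : Finset ι → Set X := fun S =>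
    (⋂ j ∈ S, {x | 0 < φ j x}) ∩ ⋂ j ∈ S, ⋂ l ∈ Sᶜ, {x | φ l x < φ j x}
  have hWo : ∀ S, IsOpen (W S) := by
    intro S
    refine IsOpen.inter ?_ ?_
    · exact isOpen_biInter_finset fun j _ => isOpen_lt continuous_const (hφc j)
    · exact isOpen_biInter_finset fun j _ => isOpen_biInter_finset fun l _ =>
        isOpen_lt (hφc l) (hφc j)
  have hWmem : ∀ S x, x ∈ W S ↔ (∀ j ∈ S, 0 < φ j x) ∧ ∀ j ∈ S, ∀ l, l ∉ S → φ l x < φ j x := by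
    intro S x
    simp [W]
  refine ⟨fun i j => ⋃ S : {S : Finset ι // S.card = i + 1 ∧ c S = some j}, W S.1,
    ?_, ?_, ?_, ?_⟩
  · intro i j
    exact isOpen_iUnion fun S => hWo _
  · intro i j x hx
    obtain ⟨⟨S, hS, hSj⟩, hx⟩ := mem_iUnion.1 hx
    have hne : S.Nonempty := Finset.card_pos.1 (by omega)
    obtain ⟨j', hj', he⟩ := hc S hne
    rw [hSj] at he
    obtain rfl : j = j' := by simpa using he
    exact hVC _ (hφV _ _ (((hWmem S x).1 hx).1 j hj'))
  · intro i j j' x hx hx'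
    obtain ⟨⟨S, hS, hSj⟩, hx⟩ := mem_iUnion.1 hx
    obtain ⟨⟨T, hT, hTj⟩, hx'⟩ := mem_iUnion.1 hx'
    have hST : S = T := by
      by_contra hne
      have h1 : ¬ S ⊆ T := fun hs => hne (Finset.eq_of_subset_of_card_le hs (by omega))
      have h2 : ¬ T ⊆ S := fun hs => hne (Finset.eq_of_subset_of_card_le hs (by omega)).symm
      obtain ⟨a, haS, haT⟩ := Finset.not_subset.1 h1
      obtain ⟨b, hbT, hbS⟩ := Finset.not_subset.1 h2
      exact lt_asymm (((hWmem S x).1 hx).2 a haS b hbS) (((hWmem T x).1 hx').2 b hbT a haT)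
    subst hST
    rw [hSj] at hTj
    simpa using hTj
  · intro x
    let T : Finset ι := Finset.univ.filter fun j => 0 < φ j x
    have hTne : T.Nonempty := by
      by_contra hne
      have h0 : ∑ i, φ i x = 0 := by
        refine Finset.sum_eq_zero fun i _ => le_antisymm ?_ (hφ0 i x)
        by_contra hlt
        exact hne ⟨i, by simp [T]; exact not_le.1 hlt⟩
      rw [hφ1] at h0
      exact one_ne_zero h0
    have hTcard : T.card ≤ n + 1 := by
      refine le_trans ?_ (hVm x).2
      rw [← Set.ncard_coe_finset]
      refine Set.ncard_le_ncard ?_ (hVm x).1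
      intro j hj
      exact hφV j x (by simpa [T] using hj)
    have hpos := Finset.card_pos.2 hTne
    refine ⟨{T.card - 1}, ?_, by simp, ?_⟩
    · simp; omega
    · intro i hi
      obtain rfl : i = T.card - 1 := by simpa using hi
      obtain ⟨j, hj, he⟩ := hc T hTne
      refine ⟨j, mem_iUnion.2 ⟨⟨T, by omega, he⟩, ?_⟩⟩
      rw [hWmem]
      refine ⟨fun j hj => by simpa [T] using hj, fun j hj l hl => ?_⟩
      have h1 : 0 < φ j x := by simpa [T] using hj
      have h2 : φ l x ≤ 0 := by simpa [T] using hl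
      exact h2.trans_lt h1

theorem colored_shrink {X ι : Type*} [TopologicalSpace X] [CompactSpace X] [RegularSpace X]
    {k p : ℕ} (U' : ℕ → ι → Set X) (hU' : ∀ i j, IsOpen (U' i j))
    (hcov : ∀ x, ∃ S : Finset ℕ, S ⊆ Finset.range k ∧ p ≤ S.card ∧
        ∀ i ∈ S, ∃ j, x ∈ U' i j) :
    ∃ U E : ℕ → ι → Set X, (∀ i j, IsOpen (U i j)) ∧ (∀ i j, IsClosed (E i j)) ∧
      (∀ i j, U i j ⊆ E i j) ∧ (∀ i j, E i j ⊆ U' i j) ∧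
      ∀ x, ∃ S : Finset ℕ, S ⊆ Finset.range k ∧ p ≤ S.card ∧ ∀ i ∈ S, ∃ j, x ∈ U i j := by
  classical
  choose S hSk hSp hSj using hcov
  choose J hJ using hSj
  have hN : ∀ x, ∃ N ∈ 𝓝 x, IsClosed N ∧ N ⊆ ⋂ i : {i // i ∈ S x}, U' i.1 (J x i.1 i.2) := by
    intro x
    refine exists_mem_nhds_isClosed_subset ?_
    refine IsOpen.mem_nhds (isOpen_iInter_of_finite fun i => hU' _ _) ?_
    exact mem_iInter.2 fun i => hJ x i.1 i.2
  choose N hNx hNc hNU using hN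
  obtain ⟨t, ht⟩ := isCompact_univ.elim_nhds_subcover (fun x => interior (N x))
    (fun x _ => interior_mem_nhds.2 (hNx x))
  refine ⟨fun i j => ⋃ x ∈ {x | x ∈ t ∧ N x ⊆ U' i j}, interior (N x),
    fun i j => ⋃ x ∈ {x | x ∈ t ∧ N x ⊆ U' i j}, N x, ?_, ?_, ?_, ?_, ?_⟩
  · intro i j
    exact isOpen_biUnion fun x _ => isOpen_interior
  · intro i j
    refine Set.Finite.isClosed_biUnion (t.finite_toSet.subset ?_) fun x _ => hNc x
    rintro x ⟨hx, -⟩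
    exact hx
  · intro i j
    exact iUnion₂_mono fun x _ => interior_subset
  · intro i j
    exact iUnion₂_subset fun x hx => hx.2
  · intro x
    have hx := ht.2 (mem_univ x)
    obtain ⟨y, hy, hxy⟩ := mem_iUnion₂.1 hx
    refine ⟨S y, hSk y, hSp y, fun i hi => ⟨J y i hi, ?_⟩⟩
    refine mem_iUnion₂.2 ⟨y, ⟨hy, ?_⟩, hxy⟩
    exact (hNU y).trans (iInter_subset (fun i : {i // i ∈ S y} => U' i.1 (J y i.1 i.2)) ⟨i, hi⟩)

theorem colored_succ {X ι : Type*} [TopologicalSpace X] [CompactSpace X] [RegularSpace X]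
    [Finite ι] {k p : ℕ} (C : ι → Set X) (U' : ℕ → ι → Set X) (hU' : ∀ i j, IsOpen (U' i j))
    (hUC : ∀ i j, U' i j ⊆ C j) (hdis : ∀ i j j' x, x ∈ U' i j → x ∈ U' i j' → j = j')
    (hcov : ∀ x, ∃ S : Finset ℕ, S ⊆ Finset.range k ∧ p + 1 ≤ S.card ∧
        ∀ i ∈ S, ∃ j, x ∈ U' i j) :
    ∃ U : ℕ → ι → Set X, (∀ i j, IsOpen (U i j)) ∧ (∀ i j, U i j ⊆ C j) ∧
      (∀ i j j' x, x ∈ U i j → x ∈ U i j' → j = j') ∧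
      ∀ x, ∃ S : Finset ℕ, S ⊆ Finset.range (k + 1) ∧ p + 2 ≤ S.card ∧
        ∀ i ∈ S, ∃ j, x ∈ U i j := by
  classical
  obtain ⟨U, E, hUo, hEc, hUE, hEU', hcov'⟩ := colored_shrink U' hU' hcov
  have hch : ∀ S : Finset ℕ, ∃ i, S.Nonempty → i ∈ S := by
    intro S
    by_cases hS : S.Nonempty
    · obtain ⟨i, hi⟩ := hS
      exact ⟨i, fun _ => hi⟩
    · exact ⟨0, fun h => absurd h hS⟩
  choose c hc using hch
  let W : Finset ℕ → ι → Set X := fun S j =>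
    U (c S) j ∩ (⋂ s ∈ S, ⋃ j', U s j') ∩ ⋂ i ∈ Finset.range k \ S, ⋂ j', (E i j')ᶜ
  have hWo : ∀ S j, IsOpen (W S j) := by
    intro S j
    refine ((hUo _ _).inter ?_).inter ?_
    · exact isOpen_biInter_finset fun s _ => isOpen_iUnion fun j' => hUo _ _
    · exact isOpen_biInter_finset fun s _ => isOpen_iInter_of_finite fun j' =>
        (hEc _ _).isOpen_compl
  have hWmem : ∀ S j x, x ∈ W S j ↔ (x ∈ U (c S) j ∧ ∀ s ∈ S, ∃ j', x ∈ U s j') ∧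
      ∀ i ∈ Finset.range k \ S, ∀ j', x ∉ E i j' := by
    intro S j x
    simp only [W, mem_inter_iff, mem_iInter, mem_iUnion, mem_compl_iff]
  have hUU' : ∀ i j, U i j ⊆ U' i j := fun i j => (hUE i j).trans (hEU' i j)
  refine ⟨fun i => if i = k then
      fun j => ⋃ S ∈ (Finset.powersetCard (p + 1) (Finset.range k)), W S j else U' i,
    ?_, ?_, ?_, ?_⟩
  · intro i j
    by_cases hi : i = k
    · simp only [hi, if_true]
      exact isOpen_biUnion fun S _ => hWo S j
    · simp only [hi, if_false]
      exact hU' i j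
  · intro i j
    by_cases hi : i = k
    · simp only [hi, if_true]
      refine iUnion₂_subset fun S _ x hx => ?_
      exact hUC _ _ (hUU' _ _ ((hWmem S j x).1 hx).1.1)
    · simp only [hi, if_false]
      exact hUC i j
  · intro i j j' x
    by_cases hi : i = k
    · simp only [hi, if_true]
      intro hx hx'
      obtain ⟨S, hS, hx⟩ := mem_iUnion₂.1 hx
      obtain ⟨T, hT, hx'⟩ := mem_iUnion₂.1 hx'
      rw [hWmem] at hx hx'
      rw [Finset.mem_powersetCard] at hS hT
      have hST : S = T := by
        by_contra hne
        have h2 : ¬ T ⊆ S := fun hs => hne (Finset.eq_of_subset_of_card_le hs (by omega)).symm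
        obtain ⟨b, hbT, hbS⟩ := Finset.not_subset.1 h2
        obtain ⟨j'', hj''⟩ := hx'.1.2 b hbT
        exact hx.2 b (Finset.mem_sdiff.2 ⟨hT.1 hbT, hbS⟩) j'' (hUE _ _ hj'')
      subst hST
      exact hdis _ _ _ x (hUU' _ _ hx.1.1) (hUU' _ _ hx'.1.1)
    · simp only [hi, if_false]
      exact hdis i j j' x
  · intro x
    obtain ⟨S, hSk, hSp, hSj⟩ := hcov' x
    have hlift : ∀ i ∈ Finset.range k, ∀ j, x ∈ U' i j → ∃ j, x ∈ (if i = k then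
      fun j => ⋃ S ∈ (Finset.powersetCard (p + 1) (Finset.range k)), W S j else U' i) j := by
      intro i hi j hj
      have hik : i ≠ k := (Finset.mem_range.1 hi).ne
      simp only [hik, if_false]
      exact ⟨j, hj⟩
    have hsub : Finset.range k ⊆ Finset.range (k + 1) := Finset.range_mono (Nat.le_succ k)
    have hSl : ∀ i ∈ S, ∃ j, x ∈ (if i = k then
      fun j => ⋃ S ∈ (Finset.powersetCard (p + 1) (Finset.range k)), W S j else U' i) j := by
      intro i hi
      obtain ⟨j, hj⟩ := hSj i hi
      exact hlift i (hSk hi) j (hUU' _ _ hj)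
    by_cases hex : ∃ i ∈ Finset.range k \ S, ∃ j, x ∈ E i j
    · obtain ⟨i, hi, j, hj⟩ := hex
      rw [Finset.mem_sdiff] at hi
      refine ⟨insert i S, ?_, ?_, ?_⟩
      · exact Finset.insert_subset (hsub hi.1) (hSk.trans hsub)
      · rw [Finset.card_insert_of_notMem hi.2]; omega
      · intro a ha
        rcases Finset.mem_insert.1 ha with rfl | ha
        · exact hlift a hi.1 j (hEU' _ _ hj)
        · exact hSl a ha
    · by_cases hcard : p + 2 ≤ S.card
      · exact ⟨S, hSk.trans hsub, hcard, hSl⟩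
      · have hSc : S.card = p + 1 := by omega
        have hkS : k ∉ S := fun hk => by simpa using hSk hk
        refine ⟨insert k S, ?_, ?_, ?_⟩
        · exact Finset.insert_subset (by simp) (hSk.trans hsub)
        · rw [Finset.card_insert_of_notMem hkS]; omega
        · intro a ha
          rcases Finset.mem_insert.1 ha with rfl | ha
          · have hne : S.Nonempty := Finset.card_pos.1 (by omega)
            obtain ⟨j, hj⟩ := hSj _ (hc S hne)
            refine ⟨j, ?_⟩
            simp only [if_true]
            refine mem_iUnion₂.2 ⟨S, Finset.mem_powersetCard.2 ⟨hSk, hSc⟩, ?_⟩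
            rw [hWmem]
            refine ⟨⟨hj, hSj⟩, fun i hi j' hj' => hex ⟨i, hi, j', hj'⟩⟩
          · exact hSl a ha

theorem colored {X ι : Type*} [TopologicalSpace X] [CompactSpace X] [T2Space X] [Fintype ι]
    {n : ℕ} (h : DimLE X n) (C : ι → Set X) (hC : ∀ i, IsOpen (C i))
    (hcov : ∀ x, ∃ i, x ∈ C i) (p : ℕ) :
    ∃ U : ℕ → ι → Set X, (∀ i j, IsOpen (U i j)) ∧ (∀ i j, U i j ⊆ C j) ∧
      (∀ i j j' x, x ∈ U i j → x ∈ U i j' → j = j') ∧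
      ∀ x, ∃ S : Finset ℕ, S ⊆ Finset.range (n + 1 + p) ∧ p + 1 ≤ S.card ∧
        ∀ i ∈ S, ∃ j, x ∈ U i j := by
  induction p with
  | zero => simpa using colored_base h C hC hcov
  | succ p ih =>
    obtain ⟨U, h1, h2, h3, h4⟩ := ih
    exact colored_succ C U h1 h2 h3 h4

/-! ### The product theorem -/

theorem dimLE_prod {X Y : Type*} [TopologicalSpace X] [CompactSpace X]
    [TopologicalSpace.MetrizableSpace X] [TopologicalSpace Y] [CompactSpace Y]
    [TopologicalSpace.MetrizableSpace Y] {n m : ℕ} (hX : DimLE X n) (hY : DimLE Y m) :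
    DimLE (X × Y) (n + m) := by
  classical
  letI := TopologicalSpace.metrizableSpaceMetric X
  letI := TopologicalSpace.metrizableSpaceMetric Y
  refine dimLE_of_indexed fun 𝒰 ho hc => ?_
  obtain ⟨δ, hδ, hleb⟩ := lebesgue_number_lemma_of_metric_sUnion
    (isCompact_univ (X := X × Y)) ho hc.ge
  obtain ⟨s, -, hsf, hs⟩ := (isCompact_univ (X := X)).finite_cover_balls hδ
  obtain ⟨t, -, htf, ht⟩ := (isCompact_univ (X := Y)).finite_cover_balls hδ
  obtain ⟨a, x, hx⟩ : ∃ (a : ℕ) (x : Fin a → X), ∀ z, ∃ i, z ∈ Metric.ball (x i) δ := by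
    obtain ⟨a, x, -, hx⟩ := hsf.fin_param
    refine ⟨a, x, fun z => ?_⟩
    obtain ⟨y, hy, hz⟩ := mem_iUnion₂.1 (hs (mem_univ z))
    rw [← hx] at hy
    obtain ⟨i, rfl⟩ := hy
    exact ⟨i, hz⟩
  obtain ⟨b, y, hy⟩ : ∃ (a : ℕ) (x : Fin a → Y), ∀ z, ∃ i, z ∈ Metric.ball (x i) δ := by
    obtain ⟨a, x, -, hx⟩ := htf.fin_param
    refine ⟨a, x, fun z => ?_⟩
    obtain ⟨y, hy, hz⟩ := mem_iUnion₂.1 (ht (mem_univ z))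
    rw [← hx] at hy
    obtain ⟨i, rfl⟩ := hy
    exact ⟨i, hz⟩
  obtain ⟨U, hUo, hUC, hUd, hUc⟩ := colored hX (fun i => Metric.ball (x i) δ)
    (fun i => Metric.isOpen_ball) hx m
  obtain ⟨V, hVo, hVC, hVd, hVc⟩ := colored hY (fun i => Metric.ball (y i) δ)
    (fun i => Metric.isOpen_ball) hy n
  refine ⟨Fin (n + m + 1) × Fin a × Fin b, fun q => U q.1 q.2.1 ×ˢ V q.1 q.2.2, ?_, ?_, ?_, ?_⟩
  · intro q
    exact (hUo _ _).prod (hVo _ _)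
  · intro q
    obtain ⟨O, hO, hb⟩ := hleb (x q.2.1, y q.2.2) (mem_univ _)
    refine ⟨O, hO, Subset.trans ?_ hb⟩
    rw [← ball_prod_same]
    exact prod_mono (hUC _ _) (hVC _ _)
  · rintro ⟨z, w⟩
    obtain ⟨S, hS, hSc, hSj⟩ := hUc z
    obtain ⟨T, hT, hTc, hTj⟩ := hVc w
    have hne : (S ∩ T).Nonempty := by
      by_contra hne
      rw [Finset.not_nonempty_iff_eq_empty] at hne
      have h1 := Finset.card_union_add_card_inter S T
      have h2 : (S ∪ T).card ≤ (Finset.range (n + m + 1)).card := by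
        refine Finset.card_le_card (Finset.union_subset ?_ ?_)
        · exact hS.trans (Finset.range_mono (by omega))
        · exact hT.trans (Finset.range_mono (by omega))
      rw [hne] at h1
      simp at h1 h2
      omega
    obtain ⟨i, hi⟩ := hne
    rw [Finset.mem_inter] at hi
    obtain ⟨j, hj⟩ := hSj i hi.1
    obtain ⟨l, hl⟩ := hTj i hi.2
    have hi' := Finset.mem_range.1 (hS hi.1)
    exact ⟨(⟨i, by omega⟩, j, l), hj, hl⟩
  · rintro ⟨z, w⟩
    refine ⟨Set.toFinite _, ?_⟩
    have hinj : Set.InjOn (Prod.fst : Fin (n + m + 1) × Fin a × Fin b → Fin (n + m + 1))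
        {q | (z, w) ∈ U q.1 q.2.1 ×ˢ V q.1 q.2.2} := by
      rintro ⟨i, j, l⟩ ⟨h1, h2⟩ ⟨i', j', l'⟩ ⟨h1', h2'⟩ he
      dsimp at *
      subst he
      rw [hUd _ _ _ _ h1 h1', hVd _ _ _ _ h2 h2']
    rw [← Set.ncard_image_of_injOn hinj]
    refine (Set.ncard_le_ncard (subset_univ _) (Set.toFinite _)).trans ?_
    rw [Set.ncard_univ]; simp

theorem dimLE_pi {K : Type*} [TopologicalSpace K] [CompactSpace K]
    [TopologicalSpace.MetrizableSpace K] {d : ℕ} (hK : DimLE K d) (m : ℕ) :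
    DimLE (Fin m → K) (m * d) := by
  induction m with
  | zero =>
    intro 𝒰 ho hc
    refine ⟨{univ}, by simp, by simp, ?_, ?_⟩
    · intro V hV
      have h : (default : Fin 0 → K) ∈ ⋃₀ 𝒰 := by rw [hc]; trivial
      obtain ⟨U, hU, hxU⟩ := h
      refine ⟨U, hU, fun x _ => ?_⟩
      rwa [Subsingleton.elim x default]
    · intro x
      have hs : {V ∈ ({univ} : Set (Set (Fin 0 → K))) | x ∈ V} ⊆ {univ} := fun V hV => hV.1
      refine ⟨(Set.finite_singleton _).subset hs, ?_⟩
      refine (Set.ncard_le_ncard hs (Set.finite_singleton _)).trans ?_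
      simp
  | succ m ih =>
    have h := dimLE_prod ih hK
    rw [show (m + 1) * d = m * d + d by ring]
    have hcont : Continuous (fun x : Fin (m + 1) → K => ((fun i => x i.succ : Fin m → K), x 0)) := by
      fun_prop
    refine dimLE_of_embedding (hcont.isClosedEmbedding ?_) h
    intro x y hxy
    simp only [Prod.mk.injEq] at hxy
    funext i
    refine Fin.cases hxy.2 (fun i => congrFun hxy.1 i) i

theorem covDim_cases (X : Type*) [TopologicalSpace X] :
    covDim X = ⊤ ∨ ∃ m : ℕ, covDim X = m ∧ DimLE X m := by
  by_cases h : {n : ℕ∞ | ∃ m : ℕ, n = (m : ℕ∞) ∧ DimLE X m}.Nonempty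
  · right
    obtain ⟨m, h1, h2⟩ := csInf_mem h
    exact ⟨m, h1, h2⟩
  · left
    rw [Set.not_nonempty_iff_eq_empty] at h
    rw [covDim, h, sInf_empty]

/-! ### Maps to polyhedra -/

theorem widimLE_of_dimLE {X Z : Type*} [TopologicalSpace X] [TopologicalSpace Z]
    [CompactSpace Z] [T2Space Z] {n : ℕ} (hZ : DimLE Z n) (f : X → Z) (hf : Continuous f)
    (ρ : X → X → ℝ) (ε : ℝ)
    (hloc : ∀ z : Z, ∃ O : Set Z, IsOpen O ∧ z ∈ O ∧ ∀ x y, f x ∈ O → f y ∈ O → ρ x y < ε) :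
    WidimLE X ρ ε n := by
  classical
  choose O hOo hzO hO using hloc
  obtain ⟨t, ht⟩ := isCompact_univ.elim_nhds_subcover O (fun z _ => (hOo z).mem_nhds (hzO z))
  obtain ⟨N, z, -, hz⟩ := t.finite_toSet.fin_param
  have hcov : ∀ w, ∃ i, w ∈ O (z i) := by
    intro w
    obtain ⟨y, hy, hw⟩ := mem_iUnion₂.1 (ht.2 (mem_univ w))
    have hy' : y ∈ range z := by rw [hz]; exact hy
    obtain ⟨i, rfl⟩ := hy'
    exact ⟨i, hw⟩
  obtain ⟨V, hVo, hVC, hVc, hVm⟩ := dimLE_indexed hZ (fun i => O (z i)) (fun i => hOo _) hcov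
  obtain ⟨φ, hφc, hφ0, hφ1, hφV⟩ := exists_pou V hVo hVc
  let e : Fin N → (Fin N → ℝ) := fun i => Pi.single i 1
  have hlin : LinearIndependent ℝ e := by
    have := (Pi.basisFun ℝ (Fin N)).linearIndependent
    convert this using 1
    funext i
    simp [e]
  have hind : AffineIndependent ℝ (Subtype.val : range e → (Fin N → ℝ)) :=
    hlin.affineIndependent.range
  let Q : PreAbstractSimplicialComplex (Fin N → ℝ) :=
    { faces := {s : Finset (Fin N → ℝ) | s.Nonempty ∧ (s : Set (Fin N → ℝ)) ⊆ range e ∧ s.card ≤ n + 1}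
      isRelLowerSet_faces := by
        intro s hs
        refine ⟨hs.1, fun b hb hbne => ⟨hbne, ?_, ?_⟩⟩
        · exact Subset.trans (Finset.coe_subset.2 hb) hs.2.1
        · exact (Finset.card_le_card hb).trans hs.2.2 }
  let P := Geometry.SimplicialComplex.ofAffineIndependent (𝕜 := ℝ) Q (hind.mono
    (iUnion₂_subset fun s hs => hs.2.1))
  have hPf : P.faces = {s : Finset (Fin N → ℝ) | s.Nonempty ∧ (s : Set (Fin N → ℝ)) ⊆ range e ∧ s.card ≤ n + 1} :=
    rfl
  have hmem : ∀ x : X, (fun i => φ i (f x)) ∈ P.space := by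
    intro x
    let T : Finset (Fin N) := Finset.univ.filter fun j => 0 < φ j (f x)
    have hTcard : T.card ≤ n + 1 := by
      refine le_trans ?_ (hVm (f x)).2
      rw [← Set.ncard_coe_finset]
      refine Set.ncard_le_ncard ?_ (hVm (f x)).1
      intro j hj
      exact hφV j _ (by simpa [T] using hj)
    have hTsum : ∑ i ∈ T, φ i (f x) = 1 := by
      rw [← hφ1 (f x)]
      refine Finset.sum_subset (Finset.subset_univ _) fun i _ hi => le_antisymm ?_ (hφ0 i _)
      simpa [T] using hi
    have hTne : T.Nonempty := by
      by_contra hne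
      rw [Finset.not_nonempty_iff_eq_empty] at hne
      rw [hne] at hTsum
      simp at hTsum
    rw [Geometry.SimplicialComplex.mem_space_iff]
    refine ⟨T.image e, ?_, ?_⟩
    · rw [hPf]
      refine ⟨hTne.image e, ?_, Finset.card_image_le.trans hTcard⟩
      intro v hv
      rw [Finset.mem_coe, Finset.mem_image] at hv
      obtain ⟨i, -, rfl⟩ := hv
      exact ⟨i, rfl⟩
    · have hcm : T.centerMass (fun i => φ i (f x)) e ∈
          convexHull ℝ ((T.image e : Finset (Fin N → ℝ)) : Set (Fin N → ℝ)) := by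
        refine Finset.centerMass_mem_convexHull T (fun i _ => hφ0 i _) (by rw [hTsum]; norm_num) ?_
        intro i hi
        exact Finset.mem_coe.2 (Finset.mem_image_of_mem e hi)
      rw [Finset.centerMass_eq_of_sum_1 _ _ hTsum] at hcm
      convert hcm using 1
      funext i
      simp only [Finset.sum_apply, Pi.smul_apply, e, Pi.single_apply, smul_eq_mul, mul_ite,
        mul_one, mul_zero, Finset.sum_ite_eq]
      split_ifs with hi
      · rfl
      · refine le_antisymm ?_ (hφ0 i _)
        simpa [T] using hi
  refine ⟨N, P, ?_, ?_, fun x => ⟨fun i => φ i (f x), hmem x⟩, ?_, ?_⟩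
  · rw [hPf]
    have hfin : {s : Finset (Fin N → ℝ) | s ⊆ (Set.finite_range e).toFinset}.Finite := by
      refine (Set.Finite.ofFinset ((Set.finite_range e).toFinset.powerset) ?_)
      intro s
      simp
    refine hfin.subset ?_
    intro s hs
    intro v hv
    simpa using hs.2.1 hv
  · intro s hs
    exact hs.2.2
  · exact Continuous.subtype_mk (continuous_pi fun i => (hφc i).comp hf) _
  · intro x y hxy
    have h : ∀ i, φ i (f x) = φ i (f y) := fun i => congrFun (congrArg Subtype.val hxy) i
    obtain ⟨i, -, hi⟩ := Finset.exists_ne_zero_of_sum_ne_zero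
      (show ∑ i, φ i (f x) ≠ 0 by rw [hφ1]; norm_num)
    have hpos : 0 < φ i (f x) := lt_of_le_of_ne (hφ0 i _) hi.symm
    have hpos' : 0 < φ i (f y) := by rw [← h i]; exact hpos
    exact hO _ x y (hVC i (hφV i _ hpos)) (hVC i (hφV i _ hpos'))

theorem widim_le_covDim {X Z : Type*} [TopologicalSpace X] [CompactSpace X] [TopologicalSpace Z]
    [CompactSpace Z] [T2Space Z] (f : X → Z) (hf : Continuous f)
    (ρ : X → X → ℝ) (ε : ℝ) (hρ : IsClosed {q : X × X | ε ≤ ρ q.1 q.2})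
    (hfρ : ∀ x y, f x = f y → ρ x y < ε) :
    widim X ρ ε ≤ covDim Z := by
  rcases covDim_cases Z with h | ⟨m, hm, hD⟩
  · rw [h]; exact le_top
  · rw [hm]
    refine sInf_le ⟨m, rfl, widimLE_of_dimLE hD f hf ρ ε fun z => ?_⟩
    have hcl : IsClosed ((Prod.map f f) '' {q : X × X | ε ≤ ρ q.1 q.2}) :=
      (hρ.isCompact.image (hf.prodMap hf)).isClosed
    have hz : (z, z) ∈ ((Prod.map f f) '' {q : X × X | ε ≤ ρ q.1 q.2})ᶜ := by
      rintro ⟨⟨x, y⟩, hxy, he⟩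
      simp only [Prod.map_apply, Prod.mk.injEq] at he
      exact absurd (hfρ x y (he.1.trans he.2.symm)) (not_lt.2 hxy)
    obtain ⟨u, v, hu, hv, hzu, hzv, huv⟩ := isOpen_prod_iff.1 hcl.isOpen_compl z z hz
    refine ⟨u ∩ v, hu.inter hv, ⟨hzu, hzv⟩, fun x y hx hy => ?_⟩
    by_contra hlt
    exact huv (show (f x, f y) ∈ u ×ˢ v from ⟨hx.1, hy.2⟩) ⟨(x, y), not_lt.1 hlt, rfl⟩

theorem rhoMetricF_lt_iff {G K : Type*} [Group G] [PseudoMetricSpace K] (α : G → ℝ)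
    {F : Set G} (hF : F.Finite) (hFne : F.Nonempty) (x y : G → K) (ε : ℝ) :
    rhoMetricF α F x y < ε ↔ ∀ g ∈ F, rhoMetric α (shift g x) (shift g y) < ε := by
  rw [rhoMetricF, (hF.image _).csSup_lt_iff (hFne.image _)]
  simp

theorem continuous_rhoMetric {G K : Type*} [Group G] [MetricSpace K] [CompactSpace K]
    (α : G → ℝ) (hα : IsGoodWeight α) :
    Continuous fun q : (G → K) × (G → K) => rhoMetric α q.1 q.2 := by
  unfold rhoMetric
  refine continuous_tsum (u := fun g => α g * Metric.diam (univ : Set K)) ?_ ?_ ?_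
  · intro g
    fun_prop
  · exact hα.2.2.mul_right _
  · intro g q
    rw [Real.norm_of_nonneg (mul_nonneg (hα.2.1 g).le dist_nonneg)]
    exact mul_le_mul_of_nonneg_left
      (Metric.dist_le_diam_of_mem isCompact_univ.isBounded (mem_univ _) (mem_univ _))
      (hα.2.1 g).le

theorem continuous_projTo {G K : Type*} [TopologicalSpace K] (F : Set G) :
    Continuous (projTo F : (G → K) → F → K) :=
  continuous_pi fun g => continuous_apply g.1

theorem covDim_proj_le {G K : Type*} [MetricSpace K] [CompactSpace K] (hK : covDim K ≠ ⊤)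
    (X : Set (G → K)) (hX : IsClosed X) (F B : Set G) (hB : B.Finite) (hFB : F ⊆ B) :
    covDim ↥(projTo B '' X) ≤ covDim ↥(projTo F '' X) + ((B \ F).ncard : ℕ∞) * covDim K := by
  rcases covDim_cases ↥(projTo F '' X) with h | ⟨m, hm, hD⟩
  · rw [h]; simp
  rcases covDim_cases K with h | ⟨d, hd, hDK⟩
  · exact absurd h hK
  rw [hm, hd]
  have hFf : F.Finite := hB.subset hFB
  have : Finite F := hFf
  have hXc : IsCompact X := hX.isCompact
  haveI : CompactSpace ↥(projTo F '' X) :=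
    isCompact_iff_compactSpace.1 (hXc.image (continuous_projTo F))
  haveI : CompactSpace ↥(projTo B '' X) :=
    isCompact_iff_compactSpace.1 (hXc.image (continuous_projTo B))
  have hprod := dimLE_prod hD (dimLE_pi hDK (B \ F).ncard)
  have : Finite ↥(B \ F) := hB.subset sdiff_subset
  let e : ↥(B \ F) ≃ Fin (B \ F).ncard := Finite.equivFin _
  have hmem : ∀ y : ↥(projTo B '' X), (fun g : F => y.1 ⟨g.1, hFB g.2⟩) ∈ projTo F '' X := by
    rintro ⟨_, x, hx, rfl⟩
    exact ⟨x, hx, rfl⟩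
  let Φ : ↥(projTo B '' X) → ↥(projTo F '' X) × (Fin (B \ F).ncard → K) := fun y =>
    (⟨fun g : F => y.1 ⟨g.1, hFB g.2⟩, hmem y⟩, fun i => y.1 ⟨(e.symm i).1, (e.symm i).2.1⟩)
  have hΦ : Continuous Φ := by
    refine Continuous.prodMk (Continuous.subtype_mk (continuous_pi fun g => ?_) _)
      (continuous_pi fun i => ?_)
    · exact (continuous_apply _).comp continuous_subtype_val
    · exact (continuous_apply _).comp continuous_subtype_val
  have hinj : Function.Injective Φ := by
    intro y y' h
    simp only [Φ, Prod.mk.injEq, Subtype.mk.injEq] at h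
    refine Subtype.ext (funext ?_)
    rintro ⟨g, hg⟩
    by_cases hgF : g ∈ F
    · exact congrFun h.1 ⟨g, hgF⟩
    · have := congrFun h.2 (e ⟨g, hg, hgF⟩)
      simpa using this
  have := dimLE_of_embedding (hΦ.isClosedEmbedding hinj) hprod
  refine sInf_le_of_le ⟨_, rfl, this⟩ ?_
  push_cast
  exact le_rfl

/-- **Lemma (from the proof of the upper-bound proposition).** Let `X` be a subshift of `K^G`
with `K` finite dimensional compact metric, `ε > 0`, and `A ∋ e` finite such that agreement on
`A` forces `ρ < ε`. Then for every nonempty finite `F ⊆ G`: (i) `π_{AF}` restricted to `X` is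
an `ε`-embedding w.r.t. `ρ_F`, hence `Widim_ε(X,ρ_F) ≤ dim π_{AF}(X)`; and (ii)
`dim π_{AF}(X) ≤ dim π_F(X) + |AF \ F| · dim K`, hence also
`Widim_ε(X,ρ_F) ≤ dim π_F(X) + |AF \ F| · dim K`. -/
theorem widim_le_dim_proj_add (G K : Type*) [Group G] [Countable G] [Infinite G]
    [MetricSpace K] [CompactSpace K] (hK : covDim K ≠ ⊤)
    (X : Set (G → K)) (hX : IsSubshift K X)
    (α : G → ℝ) (hα : IsGoodWeight α) (ε : ℝ) (hε : 0 < ε)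
    (A : Set G) (hA : A.Finite) (heA : (1 : G) ∈ A)
    (hAsep : ∀ x y : G → K, (∀ g ∈ A, x g = y g) → rhoMetric α x y < ε)
    (F : Set G) (hF : F.Finite) (hFne : F.Nonempty) :
    IsEpsEmb (fun x y : X => rhoMetricF α F x.1 y.1) ε
        (fun x : X => projTo (Set.image2 (· * ·) A F) x.1) ∧
      widim X (fun x y : X => rhoMetricF α F x.1 y.1) ε ≤
        covDim ↥(projTo (Set.image2 (· * ·) A F) '' X) ∧
      covDim ↥(projTo (Set.image2 (· * ·) A F) '' X) ≤
        covDim ↥(projTo F '' X) +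
          ((Set.image2 (· * ·) A F \ F).ncard : ℕ∞) * covDim K ∧
      widim X (fun x y : X => rhoMetricF α F x.1 y.1) ε ≤
        covDim ↥(projTo F '' X) +
          ((Set.image2 (· * ·) A F \ F).ncard : ℕ∞) * covDim K := by
  have hFB : F ⊆ Set.image2 (· * ·) A F := fun g hg => ⟨1, heA, g, hg, one_mul g⟩
  have hBf : (Set.image2 (· * ·) A F).Finite := hA.image2 _ hF
  have hXc : IsCompact X := hX.1.isCompact
  haveI : CompactSpace X := isCompact_iff_compactSpace.1 hXc
  haveI : CompactSpace ↥(projTo (Set.image2 (· * ·) A F) '' X) :=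
    isCompact_iff_compactSpace.1 (hXc.image (continuous_projTo _))
  have hemb : IsEpsEmb (fun x y : X => rhoMetricF α F x.1 y.1) ε
      (fun x : X => projTo (Set.image2 (· * ·) A F) x.1) := by
    refine ⟨(continuous_projTo _).comp continuous_subtype_val, fun x y hxy => ?_⟩
    rw [rhoMetricF_lt_iff α hF hFne]
    intro g hg
    refine hAsep _ _ fun a ha => ?_
    exact congrFun hxy ⟨a * g, a, ha, g, hg, rfl⟩
  have hw : widim X (fun x y : X => rhoMetricF α F x.1 y.1) ε ≤
      covDim ↥(projTo (Set.image2 (· * ·) A F) '' X) := by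
    refine widim_le_covDim
      (fun x : X => (⟨projTo (Set.image2 (· * ·) A F) x.1, x.1, x.2, rfl⟩ :
        ↥(projTo (Set.image2 (· * ·) A F) '' X)))
      (Continuous.subtype_mk hemb.1 _) _ ε ?_ ?_
    · have hset : {q : X × X | ε ≤ rhoMetricF α F q.1.1 q.2.1} =
          ⋃ g ∈ F, {q : X × X | ε ≤ rhoMetric α (shift g q.1.1) (shift g q.2.1)} := by
        ext q
        have := rhoMetricF_lt_iff α hF hFne q.1.1 q.2.1 ε
        rw [← not_iff_not] at this
        push Not at this
        simpa using this
      rw [hset]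
      refine hF.isClosed_biUnion fun g _ => ?_
      refine isClosed_le continuous_const ?_
      have hs : Continuous (shift g : (G → K) → G → K) :=
        continuous_pi fun h => continuous_apply (h * g)
      exact (continuous_rhoMetric α hα).comp
        (((hs.comp continuous_subtype_val).comp continuous_fst).prodMk
          ((hs.comp continuous_subtype_val).comp continuous_snd))
    · intro x y hxy
      exact hemb.2 x y (congrArg Subtype.val hxy)
  have hd := covDim_proj_le hK X hX.1 F _ hBf hFB
  exact ⟨hemb, hw, hd, hw.trans hd⟩
end

section
/- Let $G$ be an infinite countable discrete group, $K$ a compact metric space, $(X,\sigma)$ a subshift of $(K^G,\sigma)$, and suppose $f: (X,\sigma) \to ([0,1]^G, \sigma')$ is an embedding into the full $G$-shift on $[0,1]^G$ (a continuous injective $G$-equivariant map). Then for every $\delta > 0$ there exists a nonempty finite subset $A$ of $G$ such that for every nonempty finite subset $E$ of $G$, the composition $\pi_{AE} \circ f : (X, \rho_E) \to [0,1]^{AE}$ is a $\delta$-embedding; that is, for all $x, y \in X$, $f(x)|_{AE} = f(y)|_{AE}$ implies $\rho_E(x,y) < \delta$. -/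
open Set Filter Topology
open scoped ENNReal NNReal symmDiff

/-- **Lemma (from Part 4 of the main proof).** If `f` is an embedding of a subshift
`X ⊆ K^G` into the full `G`-shift on `[0,1]^G`, then for every `δ > 0` there is a nonempty
finite `A ⊆ G` such that for every nonempty finite `E ⊆ G` the composition `π_{AE} ∘ f` is a
`δ`-embedding of `(X, ρ_E)` into `[0,1]^{AE}`. -/
theorem proj_comp_embedding_is_delta_embedding (G K : Type*) [Group G] [Countable G]
    [Infinite G] [MetricSpace K] [CompactSpace K]
    (X : Set (G → K)) (hX : IsSubshift K X)
    (α : G → ℝ) (hα : IsGoodWeight α)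
    (f : (G → K) → (G → Set.Icc (0 : ℝ) 1))
    (hfc : ContinuousOn f X) (hfi : Set.InjOn f X)
    (hfe : ∀ g : G, ∀ x ∈ X, f (shift g x) = shift g (f x)) :
    ∀ δ > (0 : ℝ), ∃ A : Set G, A.Finite ∧ A.Nonempty ∧
      ∀ E : Set G, E.Finite → E.Nonempty →
        IsEpsEmb (fun x y : X => rhoMetricF α E x.1 y.1) δ
          (fun x : X => projTo (Set.image2 (· * ·) A E) (f x.1)) := by
  intro δ hδ
  obtain ⟨hXc, hXs⟩ := hX
  obtain ⟨-, hαpos, hαsum⟩ := hα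
  haveI : CompactSpace X := isCompact_iff_compactSpace.mp hXc.isCompact
  have hf : Continuous (fun x : X => f x.1) := continuousOn_iff_continuous_restrict.mp hfc
  have hfg : ∀ g : G, Continuous (fun x : X => f x.1 g) := fun g =>
    (continuous_apply g).comp hf
  obtain ⟨D, hD⟩ := (Metric.isBounded_iff.mp (isCompact_univ (X := K)).isBounded)
  have hρ : Continuous (fun p : X × X => rhoMetric α p.1.1 p.2.1) := by
    unfold rhoMetric
    refine continuous_tsum (u := fun g => α g * D) (fun g => ?_) (hαsum.mul_right D) ?_
    · have h1 : Continuous (fun p : X × X => p.1.1 g) :=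
        (continuous_apply g).comp (continuous_subtype_val.comp continuous_fst)
      have h2 : Continuous (fun p : X × X => p.2.1 g) :=
        (continuous_apply g).comp (continuous_subtype_val.comp continuous_snd)
      exact continuous_const.mul (h1.dist h2)
    · intro g p
      rw [Real.norm_of_nonneg (mul_nonneg (hαpos g).le dist_nonneg)]
      exact mul_le_mul_of_nonneg_left (hD (mem_univ _) (mem_univ _)) (hαpos g).le
  have hC : IsCompact {p : X × X | δ ≤ rhoMetric α p.1.1 p.2.1} :=
    (isClosed_le continuous_const hρ).isCompact
  obtain ⟨A, hA⟩ := hC.elim_finite_subfamily_closed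
    (fun g : G => {p : X × X | f p.1.1 g = f p.2.1 g})
    (fun g => isClosed_eq ((hfg g).comp continuous_fst) ((hfg g).comp continuous_snd))
    (by
      ext p
      simp only [mem_inter_iff, mem_setOf_eq, mem_iInter, mem_empty_iff_false, iff_false, not_and]
      intro h1 h2
      have h3 : p.1.1 = p.2.1 := hfi p.1.2 p.2.2 (funext h2)
      rw [h3] at h1
      simp only [rhoMetric, dist_self, mul_zero, tsum_zero] at h1
      linarith)
  refine ⟨insert 1 (A : Set G), A.finite_toSet.insert 1, insert_nonempty _ _, ?_⟩
  intro E hE hEn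
  refine ⟨continuous_pi fun g => hfg g.1, ?_⟩
  intro x y hxy
  have key : ∀ g ∈ E, rhoMetric α (shift g x.1) (shift g y.1) < δ := by
    intro g hg
    by_contra hlt
    have hmem : ((⟨shift g x.1, hXs g _ x.2⟩, ⟨shift g y.1, hXs g _ y.2⟩) : X × X) ∈
        (∅ : Set (X × X)) := by
      rw [← hA]
      refine ⟨not_lt.mp hlt, ?_⟩
      simp only [mem_iInter, mem_setOf_eq]
      intro a ha
      rw [hfe g _ x.2, hfe g _ y.2]
      exact congrFun hxy ⟨a * g, mem_image2_of_mem (mem_insert_of_mem _ ha) hg⟩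
    exact hmem
  obtain ⟨g, hg, hgs⟩ := (hEn.image
    (fun g => rhoMetric α (shift g x.1) (shift g y.1))).csSup_mem (hE.image _)
  show sSup _ < δ
  rw [← hgs]
  exact key g hg
end

section
/- Let $G$ be an infinite countable discrete amenable group, $K$ a compact metric space containing a topological copy of $[0,1]$, and $(X,\sigma)$ a subshift of $(K^G,\sigma)$. Suppose $\{T_k\}_{k=1}^\infty$ is a Følner sequence of $G$, $J_k \subset T_k$ are finite subsets, and for every $k$ there is a continuous map $f_k : (K^{J_k}, d_{l^\infty}) \to (X, \rho_{T_k})$ satisfying $d_{l^\infty}(u,v) \le \rho_{T_k}(f_k(u), f_k(v))$ for all $u, v \in K^{J_k}$. Then $\mathrm{mdim}(X,\sigma) \ge \limsup_{k\to\infty} |J_k|/|T_k|$. -/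
open Set Filter Topology
open scoped ENNReal NNReal symmDiff

section NoRetraction
open MeasureTheory

theorem det_poly {E : Type*} [NormedAddCommGroup E] [NormedSpace ℝ E] [FiniteDimensional ℝ E]
    (A : E →L[ℝ] E) : ∃ p : Polynomial ℝ, p.natDegree ≤ Module.finrank ℝ E ∧
      ∀ t : ℝ, p.eval t = (ContinuousLinearMap.id ℝ E + t • A).det := by
  classical
  let b := Module.finBasis ℝ E
  let M := LinearMap.toMatrix b b (A : E →ₗ[ℝ] E)
  refine ⟨Matrix.det ((Polynomial.X : Polynomial ℝ) • M.map Polynomial.C +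
    (1 : Matrix _ _ ℝ).map Polynomial.C), ?_, ?_⟩
  · simpa using Polynomial.natDegree_det_X_add_C_le M 1
  · intro t
    have h2 : (ContinuousLinearMap.id ℝ E + t • A).det
        = LinearMap.det (LinearMap.id + t • (A : E →ₗ[ℝ] E)) := rfl
    rw [h2, ← LinearMap.det_toMatrix b, ← Polynomial.coe_evalRingHom, RingHom.map_det]
    congr 1
    ext i j
    by_cases hij : i = j
    · simp [M, hij, add_comm]
      ring
    · simp [M, hij]
      ring

theorem det_pos_small {E : Type*} [NormedAddCommGroup E] [NormedSpace ℝ E] [FiniteDimensional ℝ E]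
    (A : E →L[ℝ] E) (C : ℝ) (hA : ‖A‖ ≤ C) (t : ℝ) (ht : 0 ≤ t) (htC : t * C < 1) :
    0 < (ContinuousLinearMap.id ℝ E + t • A).det := by
  obtain ⟨p, -, hp⟩ := det_poly A
  rw [← hp]
  by_contra hneg
  push Not at hneg
  have h0 : p.eval 0 = 1 := by rw [hp, zero_smul, add_zero]; exact LinearMap.det_id
  have hc : ContinuousOn (fun s => p.eval s) (Icc 0 t) := p.continuous.continuousOn
  have := intermediate_value_Icc' ht hc
  obtain ⟨s, hs, hs0⟩ := this ⟨hneg, by simp [h0]⟩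
  simp only [hp] at hs0
  have hs1 : s * C < 1 := by
    have : 0 ≤ C := (norm_nonneg _).trans hA
    nlinarith [hs.1, hs.2]
  have hk : LinearMap.ker ((ContinuousLinearMap.id ℝ E + s • A : E →L[ℝ] E) : E →ₗ[ℝ] E) = ⊥ := by
    rw [LinearMap.ker_eq_bot']
    intro v hv
    have hv' : v + s • A v = 0 := by simpa using hv
    have h1 : ‖v‖ = s * ‖A v‖ := by
      rw [eq_neg_of_add_eq_zero_left hv', norm_neg, norm_smul, Real.norm_of_nonneg hs.1]
      rw [← eq_neg_of_add_eq_zero_left hv']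
    have h2 : ‖A v‖ ≤ C * ‖v‖ := A.le_of_opNorm_le hA v
    by_contra hne
    have : 0 < ‖v‖ := norm_pos_iff.2 hne
    nlinarith [mul_le_mul_of_nonneg_left h2 hs.1]
  have := LinearMap.bot_lt_ker_of_det_eq_zero hs0
  rw [hk] at this
  exact lt_irrefl _ this

theorem lip_ext {E : Type*} [NormedAddCommGroup E] [NormedSpace ℝ E] {R : ℝ}
    (u : E → E) (C : ℝ≥0) (hu : LipschitzOnWith C u (Metric.closedBall 0 R))
    (h0 : ∀ x, ‖x‖ = R → u x = 0) :
    LipschitzWith C ((Metric.closedBall 0 R).indicator u) := by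
  have key : ∀ x y, ‖x‖ ≤ R → R < ‖y‖ → ‖u x‖ ≤ C * ‖x - y‖ := by
    intro x y hx hy
    have hc : ContinuousOn (fun s : ℝ => ‖AffineMap.lineMap x y s‖) (Icc 0 1) := by
      apply Continuous.continuousOn
      simp only [AffineMap.lineMap_apply_module]
      fun_prop
    obtain ⟨s, hs, hsR⟩ := intermediate_value_Icc zero_le_one hc
      (show R ∈ _ by simp [hx, hy.le])
    have h1 := hu.norm_sub_le (show x ∈ Metric.closedBall (0:E) R by simpa using hx)
      (show AffineMap.lineMap x y s ∈ Metric.closedBall (0:E) R by simpa using hsR.le)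
    rw [h0 _ hsR, sub_zero] at h1
    refine h1.trans ?_
    gcongr
    rw [← dist_eq_norm, dist_left_lineMap, dist_eq_norm, Real.norm_of_nonneg hs.1]
    exact mul_le_of_le_one_left (norm_nonneg _) hs.2
  apply LipschitzWith.of_dist_le_mul
  intro x y
  rw [dist_eq_norm, dist_eq_norm]
  by_cases hx : ‖x‖ ≤ R <;> by_cases hy : ‖y‖ ≤ R
  · rw [indicator_of_mem (by simpa using hx), indicator_of_mem (by simpa using hy)]
    exact hu.norm_sub_le (by simpa using hx) (by simpa using hy)
  · rw [indicator_of_mem (by simpa using hx), indicator_of_notMem (by simpa using hy), sub_zero]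
    exact key x y hx (not_le.1 hy)
  · rw [indicator_of_notMem (by simpa using hx), indicator_of_mem (by simpa using hy), zero_sub,
      norm_neg, norm_sub_rev]
    exact key y x hy (not_le.1 hx)
  · rw [indicator_of_notMem (by simpa using hx), indicator_of_notMem (by simpa using hy)]
    simp; positivity

theorem image_ball {E : Type*} [NormedAddCommGroup E] [NormedSpace ℝ E] [CompleteSpace E] {R : ℝ}
    (u : E → E) (C : ℝ≥0) (hu : LipschitzOnWith C u (Metric.closedBall 0 R))
    (h0 : ∀ x, ‖x‖ = R → u x = 0) (hR : ∀ x, ‖x‖ ≤ R → ‖x + u x‖ ≤ R)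
    (t : ℝ≥0) (ht1 : t ≤ 1) (htC : t * C < 1) :
    InjOn (fun x => x + (t:ℝ) • u x) (Metric.closedBall 0 R) ∧
    (fun x => x + (t:ℝ) • u x) '' (Metric.closedBall 0 R) = Metric.closedBall 0 R := by
  have htC' : (t:ℝ) * C < 1 := by exact_mod_cast htC
  have ht1' : (t:ℝ) ≤ 1 := by exact_mod_cast ht1
  refine ⟨?_, Subset.antisymm ?_ ?_⟩
  · intro x hx y hy hxy
    have h1 := hu.norm_sub_le hx hy
    have h2 : x - y = (t:ℝ) • (u y - u x) := by
      simp only at hxy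
      rw [smul_sub, sub_eq_sub_iff_add_eq_add, hxy, add_comm]
    have h3 : ‖x - y‖ = t * ‖u x - u y‖ := by
      conv_lhs => rw [h2]
      rw [norm_smul, norm_sub_rev]; simp
    by_contra hne
    have : 0 < ‖x - y‖ := norm_pos_iff.2 (sub_ne_zero.2 hne)
    nlinarith [mul_le_mul_of_nonneg_left h1 t.2]
  · rintro _ ⟨x, hx, rfl⟩
    have hx' : ‖x‖ ≤ R := by simpa using hx
    have hx2 : x + u x ∈ Metric.closedBall (0:E) R := by simpa using hR x hx'
    have := (convex_closedBall (0:E) R) hx hx2 (sub_nonneg.2 ht1') t.2 (by simp)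
    convert this using 1
    simp only [NNReal.val_eq_coe]
    module
  · intro y hy
    have hl := lip_ext u C hu h0
    have hcon : ContractingWith (t * C) (fun x => y - (t:ℝ) • (Metric.closedBall 0 R).indicator u x) := by
      refine ⟨htC, LipschitzWith.of_dist_le_mul fun a b => ?_⟩
      rw [dist_sub_left, dist_smul₀]
      have := hl.dist_le_mul a b
      simp only [NNReal.coe_mul, NNReal.norm_eq]
      rw [mul_assoc]
      gcongr
    have hfix := hcon.fixedPoint_isFixedPt
    set x := ContractingWith.fixedPoint _ hcon
    have hfix' : y - (t:ℝ) • (Metric.closedBall 0 R).indicator u x = x := hfix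
    by_cases hx : x ∈ Metric.closedBall (0:E) R
    · refine ⟨x, hx, ?_⟩
      rw [indicator_of_mem hx] at hfix'
      simp only
      rw [← eq_sub_iff_add_eq, hfix']
    · rw [indicator_of_notMem hx] at hfix'
      simp at hfix'
      rw [hfix'] at hy
      exact absurd hy hx

theorem no_ret {E : Type*} [NormedAddCommGroup E] [InnerProductSpace ℝ E] [FiniteDimensional ℝ E]
    [MeasurableSpace E] [BorelSpace E]
    (r : E → E) (hr : ContDiff ℝ 1 r) (R : ℝ) (hR : 0 < R) (hn : ∀ x, ‖r x‖ = R)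
    (hid : ∀ x, ‖x‖ = R → r x = x) : False := by
  classical
  set B := Metric.closedBall (0:E) R with hB
  have hBc : IsCompact B := isCompact_closedBall 0 R
  let u : E → E := fun x => r x - x
  have hu : ContDiff ℝ 1 u := hr.sub contDiff_id
  have hud : ∀ x, HasFDerivAt u (fderiv ℝ u x) x := fun x =>
    (hu.differentiable one_ne_zero x).hasFDerivAt
  have hrd : ∀ x, HasFDerivAt r (fderiv ℝ r x) x := fun x =>
    (hr.differentiable one_ne_zero x).hasFDerivAt
  have hdu : Continuous (fderiv ℝ u) := hu.continuous_fderiv one_ne_zero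
  obtain ⟨C, hC⟩ : ∃ C : ℝ, ∀ x ∈ B, ‖fderiv ℝ u x‖ ≤ C :=
    hBc.exists_bound_of_continuousOn hdu.continuousOn
  have hC0 : 0 ≤ C := (norm_nonneg _).trans (hC 0 (by simp [hB, hR.le]))
  lift C to ℝ≥0 using hC0
  have hlip : LipschitzOnWith C u B :=
    (convex_closedBall 0 R).lipschitzOnWith_of_nnnorm_fderiv_le
      (fun x _ => (hud x).differentiableAt) (fun x hx => hC x hx)
  -- determinants vanish at time one
  have hdet1 : ∀ x, (ContinuousLinearMap.id ℝ E + (1:ℝ) • fderiv ℝ u x).det = 0 := by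
    intro x
    have e : ContinuousLinearMap.id ℝ E + (1:ℝ) • fderiv ℝ u x = fderiv ℝ r x := by
      have : fderiv ℝ u x = fderiv ℝ r x - ContinuousLinearMap.id ℝ E :=
        ((hrd x).sub (hasFDerivAt_id x)).fderiv
      rw [this]; simp
    rw [e]
    by_contra hne
    have hne' : LinearMap.det (fderiv ℝ r x : E →ₗ[ℝ] E) ≠ 0 := hne
    have hs : Function.Surjective (fderiv ℝ r x) :=
      (LinearEquiv.ofIsUnitDet (f := (fderiv ℝ r x : E →ₗ[ℝ] E)) (v := Module.finBasis ℝ E)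
        (v' := Module.finBasis ℝ E) (by
          rw [LinearMap.det_toMatrix]; exact hne'.isUnit)).surjective
    obtain ⟨v, hv⟩ := hs (r x)
    have h1 := (hrd x).norm_sq
    have h2 : HasFDerivAt (fun y => ‖r y‖ ^ 2) (0 : E →L[ℝ] ℝ) x := by
      simp only [hn]; exact hasFDerivAt_const _ _
    have h3 := congrArg (fun L => L v) (h1.unique h2)
    simp [hv, hn, hR.ne'] at h3
  -- small times
  have hsmall : ∀ t : ℝ≥0, t ≤ 1 → t * C < 1 →
      ∫ x in B, (ContinuousLinearMap.id ℝ E + (t:ℝ) • fderiv ℝ u x).det = volume.real B := by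
    intro t ht1 htC
    obtain ⟨hinj, him⟩ := image_ball u C hlip (fun x hx => by simp [u, hid x hx])
      (fun x _ => by simp [u, hn]) t ht1 htC
    have := integral_image_eq_integral_abs_det_fderiv_smul volume (s := B)
      (f := fun x => x + (t:ℝ) • u x)
      (f' := fun x => ContinuousLinearMap.id ℝ E + (t:ℝ) • fderiv ℝ u x)
      Metric.isClosed_closedBall.measurableSet
      (fun x _ => ((hasFDerivAt_id x).add ((hud x).const_smul (t:ℝ))).hasFDerivWithinAt)
      hinj (fun _ => (1:ℝ))
    rw [him] at this
    simp only [smul_eq_mul, mul_one, integral_const, measureReal_restrict_apply_univ] at this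
    rw [this]
    apply setIntegral_congr_fun Metric.isClosed_closedBall.measurableSet
    intro x hx
    exact (abs_of_pos (det_pos_small _ C (hC x hx) t t.2 (by exact_mod_cast htC))).symm
  -- interpolation
  set d := Module.finrank ℝ E
  let s := Finset.range (d + 1)
  let v : ℕ → ℝ := fun j => 1 / ((C + 1) * (j + 1))
  have hvpos : ∀ j, 0 ≤ v j := fun j => by positivity
  have hvs : InjOn v s := by
    intro a _ b _ hab
    simp only [v, one_div, inv_inj] at hab
    have : ((C:ℝ) + 1) ≠ 0 := by positivity
    simpa [this] using hab
  have hvol : ∀ j, ∫ x in B, (ContinuousLinearMap.id ℝ E + (v j) • fderiv ℝ u x).det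
      = volume.real B := by
    intro j
    have hCp : (0:ℝ) < C + 1 := by positivity
    have hj : (1:ℝ) ≤ j + 1 := by simp
    have hC1 : (1:ℝ) ≤ C + 1 := by simp
    have hv1 : v j ≤ 1 := by
      simp only [v]
      rw [div_le_one (by positivity)]
      nlinarith
    have hv2 : v j * C < 1 := by
      simp only [v]
      rw [div_mul_eq_mul_div, div_lt_one (by positivity)]
      nlinarith
    obtain ⟨w, hw⟩ : ∃ w : ℝ≥0, (w : ℝ) = v j := ⟨⟨v j, hvpos j⟩, rfl⟩
    rw [← hw] at hv1 hv2 ⊢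
    exact hsmall w (by exact_mod_cast hv1) (by exact_mod_cast hv2)
  have hpt : ∀ x, (ContinuousLinearMap.id ℝ E + (1:ℝ) • fderiv ℝ u x).det =
      ∑ j ∈ s, (Lagrange.basis s v j).eval 1 *
        (ContinuousLinearMap.id ℝ E + (v j) • fderiv ℝ u x).det := by
    intro x
    obtain ⟨p, hpd, hp⟩ := det_poly (fderiv ℝ u x)
    have hdeg : p.degree < s.card := by
      refine Polynomial.degree_le_natDegree.trans_lt ?_
      simp only [s, Finset.card_range]
      exact_mod_cast Nat.lt_succ_of_le hpd
    have := congrArg (Polynomial.eval 1) (Lagrange.eq_interpolate hvs hdeg)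
    rw [hp, Lagrange.interpolate_apply, Polynomial.eval_finsetSum] at this
    rw [this]
    refine Finset.sum_congr rfl fun j _ => ?_
    simp only [Polynomial.eval_mul, Polynomial.eval_C, hp]
    ring
  have hI : ∀ j, IntegrableOn
      (fun x => (ContinuousLinearMap.id ℝ E + (v j) • fderiv ℝ u x).det) B := by
    intro j
    refine (Continuous.continuousOn ?_).integrableOn_compact hBc
    exact ContinuousLinearMap.continuous_det.comp
      (continuous_const.add (hdu.const_smul (v j)))
  have h0 : ∫ x in B, (ContinuousLinearMap.id ℝ E + (1:ℝ) • fderiv ℝ u x).det = 0 := by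
    simp only [hdet1, integral_zero]
  have h1 : ∫ x in B, (ContinuousLinearMap.id ℝ E + (1:ℝ) • fderiv ℝ u x).det
      = volume.real B := by
    simp only [hpt]
    rw [integral_finsetSum _ (fun j _ => (hI j).const_mul _)]
    simp only [integral_const_mul, hvol]
    rw [← Finset.sum_mul, ← Polynomial.eval_finsetSum,
      Lagrange.sum_basis hvs (by simp [s])]
    simp
  have hpos : 0 < volume.real B :=
    ENNReal.toReal_pos (Metric.measure_closedBall_pos volume 0 hR).ne' hBc.measure_lt_top.ne
  linarith

end NoRetraction

section PM
open scoped Manifold ContDiff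

theorem exists_zero_of_bdd {E : Type*} [NormedAddCommGroup E] [InnerProductSpace ℝ E]
    [FiniteDimensional ℝ E] (G : E → E) (hG : Continuous G) (M : ℝ) (hM : ∀ x, ‖G x - x‖ ≤ M) :
    ∃ x, G x = 0 := by
  by_contra hne
  push Not at hne
  have hM0 : 0 ≤ M := (norm_nonneg _).trans (hM 0)
  obtain ⟨S, hS⟩ := exists_contMDiffMap_forall_mem_convex_of_local_const (n := (1 : ℕ∞)) 𝓘(ℝ, E)
    (t := fun x => Metric.ball (G x) (min 1 ‖G x‖)) (fun x => convex_ball _ _) (by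
      intro x
      refine ⟨G x, ?_⟩
      have hc : Continuous fun y => min 1 ‖G y‖ - dist (G x) (G y) := by fun_prop
      have : 0 < min 1 ‖G x‖ - dist (G x) (G x) := by simp [hne x]
      filter_upwards [hc.continuousAt.eventually (lt_mem_nhds this)] with y hy
      simpa [sub_pos] using hy)
  have hSc : ContDiff ℝ 1 S := S.contMDiff.contDiff
  have hS0 : ∀ x, S x ≠ 0 := by
    intro x h0
    have := hS x
    rw [h0, Metric.mem_ball, dist_comm, dist_zero_right] at this
    exact absurd (this.trans_le (min_le_right _ _)) (lt_irrefl _)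
  have hSM : ∀ x, ‖S x - x‖ ≤ M + 1 := by
    intro x
    have h1 := (hS x)
    rw [Metric.mem_ball, dist_eq_norm] at h1
    have h2 := h1.trans_le (min_le_left _ _)
    have h3 := norm_add_le (S x - G x) (G x - x)
    rw [sub_add_sub_cancel] at h3
    linarith [hM x]
  let φ : ContDiffBump (0 : E) := ⟨M + 2, M + 3, by linarith, by linarith⟩
  let H : E → E := fun x => x + φ x • (S x - x)
  have hHc : ContDiff ℝ 1 H := contDiff_id.add (φ.contDiff.smul (hSc.sub contDiff_id))
  have hH0 : ∀ x, H x ≠ 0 := by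
    intro x
    by_cases hx : ‖x‖ ≤ M + 2
    · have : φ x = 1 := φ.one_of_mem_closedBall (by simpa [φ] using hx)
      simp [H, this, hS0 x]
    · intro h0
      have h1 : x = - (φ x • (S x - x)) := eq_neg_of_add_eq_zero_left h0
      have h2 : ‖x‖ ≤ M + 1 := by
        rw [h1, norm_neg, norm_smul, Real.norm_of_nonneg φ.nonneg]
        exact (mul_le_of_le_one_left (norm_nonneg _) φ.le_one).trans (hSM x)
      linarith
  have hHid : ∀ x, ‖x‖ = M + 3 → H x = x := by
    intro x hx
    have : φ x = 0 := φ.zero_of_le_dist (by simp [φ, hx])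
    simp [H, this]
  borelize E
  refine no_ret (fun x => ((M + 3) / ‖H x‖) • H x) ?_ (M + 3) (by linarith) ?_ ?_
  · exact (contDiff_const.div (hHc.norm ℝ hH0) (fun x => norm_ne_zero_iff.2 (hH0 x))).smul hHc
  · intro x
    have := norm_ne_zero_iff.2 (hH0 x)
    rw [norm_smul, norm_div, norm_norm, div_mul_cancel₀ _ this, Real.norm_of_nonneg (by linarith)]
  · intro x hx
    simp only [hHid x hx, hx]
    rw [div_self (by linarith), one_smul]

/-- Poincaré-Miranda. -/
theorem poincare_miranda {ι : Type*} [Fintype ι] (F : (ι → Icc (0:ℝ) 1) → ι → ℝ)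
    (hF : Continuous F) (h0 : ∀ x i, x i = 0 → F x i < 0) (h1 : ∀ x i, x i = 1 → 0 < F x i) :
    ∃ x, F x = 0 := by
  let q : EuclideanSpace ℝ ι → (ι → Icc (0:ℝ) 1) := fun x i => projIcc 0 1 zero_le_one (x i)
  have hq : Continuous q := continuous_pi fun i => continuous_projIcc.comp (by fun_prop)
  let G : EuclideanSpace ℝ ι → EuclideanSpace ℝ ι := fun x =>
    x + WithLp.toLp 2 (fun i => F (q x) i - (q x i : ℝ))
  have hK : Continuous fun y : ι → Icc (0:ℝ) 1 =>
      (WithLp.toLp 2 (fun i => F y i - (y i : ℝ)) : EuclideanSpace ℝ ι) := by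
    refine (PiLp.continuous_toLp 2 _).comp ?_
    fun_prop
  have hG : Continuous G := continuous_id.add (hK.comp hq)
  obtain ⟨M, hM⟩ : ∃ M, ∀ y : ι → Icc (0:ℝ) 1,
      ‖(WithLp.toLp 2 (fun i => F y i - (y i : ℝ)) : EuclideanSpace ℝ ι)‖ ≤ M := by
    obtain ⟨M, hM⟩ := isCompact_univ.exists_bound_of_continuousOn hK.continuousOn
    exact ⟨M, fun y => hM y trivial⟩
  obtain ⟨x, hx⟩ := exists_zero_of_bdd G hG M (fun x => by simpa [G] using hM (q x))
  refine ⟨q x, funext fun i => ?_⟩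
  have hi : x i + (F (q x) i - (q x i : ℝ)) = 0 := by
    simpa [G] using congrArg (fun z : EuclideanSpace ℝ ι => z i) hx
  rcases le_or_gt (x i) 0 with h | h
  · have e : q x i = 0 := projIcc_of_le_left _ h
    have := h0 _ i e
    simp only [e] at hi
    simp at hi
    linarith
  rcases le_or_gt 1 (x i) with h' | h'
  · have e : q x i = 1 := projIcc_of_right_le _ h'
    have := h1 _ i e
    simp only [e] at hi
    simp at hi
    linarith
  · have e : (q x i : ℝ) = x i := by
      simp only [q]
      rw [projIcc_of_mem _ ⟨h.le, h'.le⟩]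
    rw [e] at hi
    simp only [Pi.zero_apply]
    linarith

end PM

section Leb

theorem dimH_space {N : ℕ} (P : Geometry.SimplicialComplex ℝ (Fin N → ℝ)) (hP : P.faces.Finite)
    (m : ℕ) (hm : ∀ s ∈ P.faces, s.card ≤ m + 1) : dimH P.space ≤ m := by
  rw [Geometry.SimplicialComplex.space, dimH_bUnion hP.countable]
  refine iSup₂_le fun s hs => ?_
  have hne := P.nonempty_of_mem_faces hs
  rw [Real.Convex.dimH_eq_finrank_vectorSpan (convex_convexHull ℝ _) (by simpa using hne)]
  rw [← direction_affineSpan, affineSpan_convexHull, direction_affineSpan]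
  norm_cast
  have h := finrank_vectorSpan_range_le ℝ (fun x : s => (x : Fin N → ℝ)) (n := s.card - 1)
    (by have := Finset.card_pos.2 hne; simp; omega)
  have h2 : range (fun x : s => (x : Fin N → ℝ)) = (s : Set (Fin N → ℝ)) := by simp
  rw [h2] at h
  have := hm s hs
  omega

theorem cube_widim {ι : Type*} [Fintype ι] {N : ℕ} (P : Geometry.SimplicialComplex ℝ (Fin N → ℝ))
    (hP : P.faces.Finite) (m : ℕ) (hm : ∀ s ∈ P.faces, s.card ≤ m + 1)
    (f : (ι → Icc (0:ℝ) 1) → Fin N → ℝ) (hf : Continuous f) (hfP : ∀ x, f x ∈ P.space)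
    (hsep : ∀ x y i, x i = 0 → y i = 1 → f x ≠ f y) : Fintype.card ι ≤ m := by
  classical
  by_contra hlt
  push Not at hlt
  let A : ι → Set (Fin N → ℝ) := fun i => f '' {x | x i = 0}
  let B : ι → Set (Fin N → ℝ) := fun i => f '' {x | x i = 1}
  have hA0 : ∀ i, (A i).Nonempty := fun i => ⟨_, fun _ => 0, rfl, rfl⟩
  have hB0 : ∀ i, (B i).Nonempty := fun i => ⟨_, fun _ => 1, rfl, rfl⟩
  have hAc : ∀ i, IsCompact (A i) := fun i =>
    ((isClosed_eq (continuous_apply i) continuous_const).isCompact).image hf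
  have hBc : ∀ i, IsCompact (B i) := fun i =>
    ((isClosed_eq (continuous_apply i) continuous_const).isCompact).image hf
  have hdisj : ∀ i, Disjoint (A i) (B i) := by
    intro i
    rw [Set.disjoint_left]
    rintro _ ⟨x, hx, rfl⟩ ⟨y, hy, hxy⟩
    exact hsep x y i hx hy hxy.symm
  let h : (Fin N → ℝ) → ι → ℝ := fun p i => Metric.infDist p (A i) - Metric.infDist p (B i)
  have hlip : LipschitzWith 2 h := by
    refine LipschitzWith.of_dist_le_mul fun p q => ?_
    rw [dist_pi_le_iff (by positivity)]
    intro i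
    have := ((Metric.lipschitz_infDist_pt (A i)).sub
      (Metric.lipschitz_infDist_pt (B i))).dist_le_mul p q
    rwa [one_add_one_eq_two] at this
  have hδ : ∀ i, ∃ δ > 0, (∀ p ∈ A i, h p i ≤ -δ) ∧ (∀ p ∈ B i, δ ≤ h p i) := by
    intro i
    obtain ⟨a, ha, hamin⟩ := (hAc i).exists_isMinOn (hA0 i)
      (Metric.continuous_infDist_pt (B i)).continuousOn
    obtain ⟨b, hb, hbmin⟩ := (hBc i).exists_isMinOn (hB0 i)
      (Metric.continuous_infDist_pt (A i)).continuousOn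
    have ha' : 0 < Metric.infDist a (B i) :=
      ((hBc i).isClosed.notMem_iff_infDist_pos (hB0 i)).1 (Set.disjoint_left.1 (hdisj i) ha)
    have hb' : 0 < Metric.infDist b (A i) :=
      ((hAc i).isClosed.notMem_iff_infDist_pos (hA0 i)).1 (Set.disjoint_right.1 (hdisj i) hb)
    refine ⟨min (Metric.infDist a (B i)) (Metric.infDist b (A i)), lt_min ha' hb', ?_, ?_⟩
    · intro p hp
      have : Metric.infDist a (B i) ≤ Metric.infDist p (B i) := hamin hp
      simp only [h, Metric.infDist_zero_of_mem hp]
      linarith [min_le_left (Metric.infDist a (B i)) (Metric.infDist b (A i))]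
    · intro p hp
      have : Metric.infDist b (A i) ≤ Metric.infDist p (A i) := hbmin hp
      simp only [h, Metric.infDist_zero_of_mem hp]
      linarith [min_le_right (Metric.infDist a (B i)) (Metric.infDist b (A i))]
  choose δ hδ0 hδA hδB using hδ
  have hdim : dimH (h '' P.space) < Module.finrank ℝ (ι → ℝ) := by
    refine (hlip.dimH_image_le _).trans_lt ((dimH_space P hP m hm).trans_lt ?_)
    rw [Module.finrank_fintype_fun_eq_card]
    exact_mod_cast hlt
  have hdense := dense_compl_of_dimH_lt_finrank hdim
  let U : Set (ι → ℝ) := Set.univ.pi fun i => Ioo (-δ i) (δ i)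
  have hU : IsOpen U := isOpen_set_pi finite_univ fun i _ => isOpen_Ioo
  obtain ⟨c, hc, hcU⟩ := hdense.exists_mem_open hU ⟨0, fun i _ => by simp [hδ0 i]⟩
  obtain ⟨x, hx⟩ := poincare_miranda (fun x i => h (f x) i - c i)
    (continuous_pi fun i => ((continuous_apply i).comp (hlip.continuous.comp hf)).sub
      continuous_const)
    (fun x i hxi => by
      have h1 := hδA i (f x) ⟨x, hxi, rfl⟩
      have h2 := (hcU i trivial).1
      linarith)
    (fun x i hxi => by
      have h1 := hδB i (f x) ⟨x, hxi, rfl⟩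
      have h2 := (hcU i trivial).2
      linarith)
  refine hc ⟨f x, hfP x, funext fun i => ?_⟩
  have := congrFun hx i
  simp only [Pi.zero_apply] at this
  linarith

end Leb

/-- **Lemma (lower bound for mean dimension).** Let `X ⊆ K^G` be a subshift where `K` contains
an isometric copy of `[0,1]`, `{T_k}` a Følner sequence, `J_k ⊆ T_k`, and suppose there are
continuous maps `f_k : (K^{J_k}, d_{l^∞}) → (X, ρ_{T_k})` which do not decrease distances.
Then `mdim(X,σ) ≥ limsup_k |J_k| / |T_k|`. -/
theorem mdim_ge_limsup_of_distance_increasing_maps (G K : Type*) [Group G] [Countable G]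
    [Infinite G] (hG : AmenableGroup G) [MetricSpace K] [CompactSpace K]
    (ι : Set.Icc (0 : ℝ) 1 → K) (hι : Isometry ι)
    (X : Set (G → K)) (hX : IsSubshift K X)
    (α : G → ℝ) (hα : IsGoodWeight α)
    (T : ℕ → Set G) (hT : IsFolnerSeq T)
    (J : ℕ → Set G) (hJ : ∀ k, J k ⊆ T k)
    (f : ∀ k : ℕ, (↥(J k) → K) → (G → K))
    (hfX : ∀ k u, f k u ∈ X)
    (hfc : ∀ k, Continuous (f k))
    (hfd : ∀ (k : ℕ) (u v : ↥(J k) → K),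
      sSup (Set.range fun g : ↥(J k) => dist (u g) (v g)) ≤
        rhoMetricF α (T k) (f k u) (f k v)) :
    Filter.limsup (fun k => ((J k).ncard : ℝ≥0∞) / ((T k).ncard : ℝ≥0∞)) atTop ≤
      mdimSubshift α X T := by
  have key : ∀ k, ((J k).ncard : ℕ∞) ≤
      widim X (fun x y : X => rhoMetricF α (T k) x.1 y.1) 1 := by
    intro k
    unfold widim
    refine le_sInf ?_
    rintro _ ⟨m, rfl, N, P, hP, hm, φ, hφc, hφ⟩
    have hJf : (J k).Finite := (hT.1 k).1.subset (hJ k)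
    have : Fintype (J k) := hJf.fintype
    let g : (J k → Icc (0:ℝ) 1) → X := fun x => ⟨f k (fun j => ι (x j)), hfX k _⟩
    have hg : Continuous g := by
      refine Continuous.subtype_mk ((hfc k).comp ?_) _
      exact continuous_pi fun j => hι.continuous.comp (continuous_apply j)
    have := cube_widim (ι := J k) P hP m hm (fun x => (φ (g x)).1)
      (continuous_subtype_val.comp (hφc.comp hg)) (fun x => (φ (g x)).2) (by
        intro x y i hx hy hxy
        have h1 := hφ _ _ (Subtype.ext hxy)
        have h2 := hfd k (fun j => ι (x j)) (fun j => ι (y j))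
        have h3 : dist (ι (x i)) (ι (y i)) ≤
            sSup (Set.range fun j : J k => dist (ι (x j)) (ι (y j))) :=
          le_csSup (Set.finite_range _).bddAbove ⟨i, rfl⟩
        rw [hι.dist_eq, hx, hy] at h3
        have h4 : dist (0 : Icc (0:ℝ) 1) 1 = 1 := by simp [Subtype.dist_eq]
        rw [h4] at h3
        exact absurd ((h3.trans h2).trans_lt h1) (lt_irrefl _))
    rw [← Nat.card_coe_set_eq, Nat.card_eq_fintype_card]
    exact_mod_cast this
  unfold mdimSubshift
  refine le_iSup_of_le ⟨1, one_pos⟩ ?_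
  refine Filter.limsup_le_limsup (Filter.Eventually.of_forall fun k => ?_)
  refine ENNReal.div_le_div_right ?_ _
  have := key k
  exact_mod_cast (ENat.toENNReal_le.2 this)
end

section
/- Let $P$ be the cone over the three-point discrete space (tripod) with the graph metric $d$ in which each edge has length one. For every $\epsilon \in (0,1)$, every positive integer $n$, and every finite set $F$ with $|F| \le 2n - 1$: there is no continuous map $f : P^n \to [0,1]^F$ such that $f(x) = f(y)$ implies $d_{l^\infty}(x,y) < \epsilon$. Equivalently, if $(P^n, d_{l^\infty})$ admits an $\epsilon$-embedding into $[0,1]^F$ for some $\epsilon \in (0,1)$, then $|F| \ge 2n$. -/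
open Set Filter Topology
open scoped ENNReal NNReal symmDiff

namespace TripodBU

abbrev Ch (X : Type*) := List X →₀ ZMod 2

variable {X : Type*}

noncomputable def cn (x : X) : Ch X →ₗ[ZMod 2] Ch X :=
  Finsupp.lmapDomain (ZMod 2) (ZMod 2) (List.cons x)

noncomputable def mp (φ : X → X) : Ch X →ₗ[ZMod 2] Ch X :=
  Finsupp.lmapDomain (ZMod 2) (ZMod 2) (List.map φ)

noncomputable def gen (l : List X) : Ch X := Finsupp.single l 1

noncomputable def bdL : List X → Ch X
  | [] => 0
  | x :: l => gen l + cn x (bdL l)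

noncomputable def bd : Ch X →ₗ[ZMod 2] Ch X := Finsupp.linearCombination (ZMod 2) bdL

noncomputable def prL (φ ψ : X → X) : List X → Ch X
  | [] => 0
  | a :: l => gen (φ a :: ψ a :: l.map ψ) + cn (φ a) (prL φ ψ l)

noncomputable def pr (φ ψ : X → X) : Ch X →ₗ[ZMod 2] Ch X :=
  Finsupp.linearCombination (ZMod 2) (prL φ ψ)

/-- Pairing with a cochain. -/
noncomputable def ev (w : List X → ZMod 2) : Ch X →ₗ[ZMod 2] ZMod 2 :=
  Finsupp.linearCombination (ZMod 2) w

@[simp] lemma cn_gen (x : X) (l : List X) : cn x (gen l) = gen (x :: l) := by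
  simp [cn, gen]
@[simp] lemma mp_gen (φ : X → X) (l : List X) : mp φ (gen l) = gen (l.map φ) := by
  simp [mp, gen]
@[simp] lemma bd_gen (l : List X) : bd (gen l) = bdL l := by
  simp [bd, gen]
@[simp] lemma pr_gen (φ ψ : X → X) (l : List X) : pr φ ψ (gen l) = prL φ ψ l := by
  simp [pr, gen]
@[simp] lemma ev_gen (w : List X → ZMod 2) (l : List X) : ev w (gen l) = w l := by
  simp [ev, gen]

lemma two_zero : (2 : ZMod 2) = 0 := by decide

lemma single_norm {N : ℕ} (p : Fin N) : ‖(Pi.single p 1 : Fin N → ℝ)‖ = 1 := by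
  rw [Pi.norm_single, norm_one]

lemma ch_add_self (c : Ch X) : c + c = 0 := by
  ext l; simpa using CharTwo.add_self_eq_zero (c l)

lemma lin_ext {M : Type*} [AddCommMonoid M] [Module (ZMod 2) M] {f g : Ch X →ₗ[ZMod 2] M}
    (h : ∀ l, f (gen l) = g (gen l)) (c : Ch X) : f c = g c := by
  have : f = g := Finsupp.lhom_ext' fun l => LinearMap.ext_ring (h l)
  rw [this]

lemma bd_cn (x : X) (c : Ch X) : bd (cn x c) = c + cn x (bd c) :=
  lin_ext (f := bd.comp (cn x)) (g := LinearMap.id + (cn x).comp bd) (fun l => by simp [bdL]) c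

lemma mp_cn (φ : X → X) (x : X) (c : Ch X) : mp φ (cn x c) = cn (φ x) (mp φ c) :=
  lin_ext (f := (mp φ).comp (cn x)) (g := (cn (φ x)).comp (mp φ)) (fun l => by simp) c

lemma mp_mp (φ ψ : X → X) (c : Ch X) : mp φ (mp ψ c) = mp (φ ∘ ψ) c :=
  lin_ext (f := (mp φ).comp (mp ψ)) (g := mp (φ ∘ ψ)) (fun l => by simp) c

lemma mp_id (c : Ch X) : mp (fun x => x) c = c :=
  lin_ext (f := mp (fun x => x)) (g := LinearMap.id) (fun l => by simp) c

lemma bdL_map (φ : X → X) (l : List X) : bdL (l.map φ) = mp φ (bdL l) := by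
  induction l with
  | nil => simp [bdL]
  | cons a l ih => simp [bdL, ih, mp_cn]

lemma bd_mp (φ : X → X) (c : Ch X) : bd (mp φ c) = mp φ (bd c) :=
  lin_ext (f := bd.comp (mp φ)) (g := (mp φ).comp bd) (fun l => by simp [bdL_map]) c

lemma pr_cn (φ ψ : X → X) (a : X) (c : Ch X) :
    pr φ ψ (cn a c) = cn (φ a) (cn (ψ a) (mp ψ c)) + cn (φ a) (pr φ ψ c) :=
  lin_ext (f := (pr φ ψ).comp (cn a))
    (g := (cn (φ a)).comp ((cn (ψ a)).comp (mp ψ)) + (cn (φ a)).comp (pr φ ψ))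
    (fun l => by simp [prL]) c

lemma prism_gen (φ ψ : X → X) (l : List X) :
    bd (prL φ ψ l) + pr φ ψ (bdL l) = gen (l.map φ) + gen (l.map ψ) := by
  induction l with
  | nil => simp [bdL, prL, ch_add_self]
  | cons a l ih =>
    have ih' : pr φ ψ (bdL l) = gen (l.map φ) + gen (l.map ψ) + bd (prL φ ψ l) := by
      rw [← ih, add_comm (bd _), add_assoc, ch_add_self, add_zero]
    simp only [bdL, prL, map_add, bd_gen, bd_cn, pr_cn, pr_gen, bdL_map, List.map_cons, ih', cn_gen]
    generalize gen (List.map ψ l) = z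
    ext m
    simp only [Finsupp.add_apply]
    generalize (gen (ψ a :: List.map ψ l)) m = A
    generalize (gen (φ a :: List.map ψ l)) m = B
    generalize ((cn (φ a)) ((cn (ψ a)) ((mp ψ) (bdL l)))) m = C
    generalize (prL φ ψ l) m = D
    generalize ((cn (φ a)) (bd (prL φ ψ l))) m = E
    linear_combination (B + C + D + E) * two_zero

lemma prism (φ ψ : X → X) (c : Ch X) :
    bd (pr φ ψ c) + pr φ ψ (bd c) = mp φ c + mp ψ c :=
  lin_ext (f := bd.comp (pr φ ψ) + (pr φ ψ).comp bd) (g := mp φ + mp ψ)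
    (fun l => by simp [prism_gen]) c

lemma prism_sum (φ : ℕ → X → X) (c : Ch X) (hc : bd c = 0) (M : ℕ) :
    bd (∑ t ∈ Finset.range M, pr (φ t) (φ (t+1)) c) = mp (φ 0) c + mp (φ M) c := by
  induction M with
  | zero => simp [ch_add_self]
  | succ M ih =>
    have := prism (φ M) (φ (M+1)) c
    rw [hc, map_zero, add_zero] at this
    rw [Finset.sum_range_succ, map_add, ih, this, add_assoc, ← add_assoc (mp (φ M) c),
      ch_add_self, zero_add]

/-- Product of coboundaries of sign functions. -/
def W (s : ℕ → X → ZMod 2) : ℕ → List X → ZMod 2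
  | 0, _ => 1
  | k+1, x :: y :: l => (s k x + s k y) * W s k (y :: l)
  | _+1, _ => 0

def al (s : ℕ → X → ZMod 2) (k : ℕ) : List X → ZMod 2
  | [] => 0
  | x :: l => s k x * W s k (x :: l)

/-- Chains supported on a set of lists. -/
abbrev Sp (S : Set (List X)) : Submodule (ZMod 2) (Ch X) := Finsupp.supported (ZMod 2) (ZMod 2) S

lemma gen_mem {S : Set (List X)} {l : List X} (h : l ∈ S) : gen l ∈ Sp S :=
  Finsupp.single_mem_supported _ _ h

lemma lin_mem {M : Type*} [AddCommMonoid M] [Module (ZMod 2) M] {S : Set (List X)}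
    {f : Ch X →ₗ[ZMod 2] M} {p : Submodule (ZMod 2) M}
    (h : ∀ l ∈ S, f (gen l) ∈ p) {c : Ch X} (hc : c ∈ Sp S) : f c ∈ p := by
  have : Sp S ≤ p.comap f := by
    rw [Sp, Finsupp.supported_eq_span_single, Submodule.span_le]
    rintro _ ⟨l, hl, rfl⟩
    exact h l hl
  exact this hc

lemma lin_eq {M : Type*} [AddCommGroup M] [Module (ZMod 2) M] {S : Set (List X)}
    {f g : Ch X →ₗ[ZMod 2] M} 
    (h : ∀ l ∈ S, f (gen l) = g (gen l)) {c : Ch X} (hc : c ∈ Sp S) : f c = g c := by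
  have := lin_mem (f := f - g) (p := ⊥) (S := S) (fun l hl => by simp [h l hl]) hc
  simpa [sub_eq_zero] using this

lemma zmod2 (a : ZMod 2) : a + a = 0 := CharTwo.add_self_eq_zero a

lemma ev_W_cn (s : ℕ → X → ZMod 2) (k : ℕ) (x y : X) (c : Ch X) :
    ev (W s (k+1)) (cn x (cn y c)) = (s k x + s k y) * ev (W s k) (cn y c) :=
  lin_ext (f := (ev (W s (k+1))).comp ((cn x).comp (cn y)))
    (g := (s k x + s k y) • ((ev (W s k)).comp (cn y))) (fun l => by simp [W]) c

lemma ev_al_cn (s : ℕ → X → ZMod 2) (k : ℕ) (x : X) (c : Ch X) :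
    ev (al s k) (cn x c) = s k x * ev (W s k) (cn x c) :=
  lin_ext (f := (ev (al s k)).comp (cn x))
    (g := s k x • ((ev (W s k)).comp (cn x))) (fun l => by simp [al]) c

lemma W_cocycle (s : ℕ → X → ZMod 2) (k : ℕ) (l : List X) (hl : l.length = k + 2) :
    ev (W s k) (bdL l) = 0 := by
  induction k generalizing l with
  | zero =>
    match l, hl with
    | [x, y], _ => simp [bdL, W]; decide
  | succ k ih =>
    match l, hl with
    | x :: y :: z :: l, hl =>
      have h := ih (y :: z :: l) (by simpa using hl)
      rw [bdL] at h
      rw [bdL, bdL]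
      generalize bdL (z :: l) = c at *
      simp only [map_add, cn_gen, ev_gen, W, ev_W_cn] at h ⊢
      linear_combination (s k x + s k y) * h + s k z * W s k (z :: l) * two_zero

lemma al_cobd (s : ℕ → X → ZMod 2) (k : ℕ) (l : List X) (hl : l.length = k + 2) :
    ev (al s k) (bdL l) = W s (k+1) l := by
  have h := W_cocycle s k l hl
  match l, hl with
  | x :: y :: l, hl =>
    rw [bdL] at h ⊢
    generalize bdL (y :: l) = c at *
    simp only [map_add, ev_gen, W, al, ev_al_cn] at h ⊢
    linear_combination s k x * h - s k x * W s k (y :: l) * two_zero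

lemma W_neg (s : ℕ → X → ZMod 2) (T : X → X) (k : ℕ) (l : List X)
    (hs : ∀ i, ∀ x ∈ l, s i (T x) = s i x + 1) : W s k (l.map T) = W s k l := by
  induction k generalizing l with
  | zero => simp [W]
  | succ k ih =>
    match l with
    | [] => simp [W]
    | [x] => simp [W]
    | x :: y :: l =>
      have := ih (y :: l) (fun i x hx => hs i x (List.mem_cons_of_mem _ hx))
      simp only [List.map_cons] at this ⊢
      simp only [W, this, hs k x (by simp), hs k y (by simp)]
      linear_combination W s k (y :: l) * two_zero

lemma al_neg (s : ℕ → X → ZMod 2) (T : X → X) (k : ℕ) (l : List X) (hl : l.length = k + 1)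
    (hs : ∀ i, ∀ x ∈ l, s i (T x) = s i x + 1) : al s k l + al s k (l.map T) = W s k l := by
  have h := W_neg s T k l hs
  match l, hl with
  | x :: l, _ =>
    simp only [List.map_cons] at h ⊢
    simp only [al, h, hs k x (by simp)]
    linear_combination s k x * W s k (x :: l) * two_zero

lemma W_ne (s : ℕ → X → ZMod 2) (k : ℕ) (l : List X) (h : W s k l ≠ 0) :
    ∀ i < k, ∃ x ∈ l, ∃ y ∈ l, s i x ≠ s i y := by
  induction k generalizing l with
  | zero => simp
  | succ k ih =>
    match l with
    | [] => simp [W] at h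
    | [x] => simp [W] at h
    | x :: y :: l =>
      intro i hi
      simp only [W] at h
      rcases Nat.lt_succ_iff_lt_or_eq.mp hi with hi | rfl
      · obtain ⟨u, hu, v, hv, huv⟩ := ih (y :: l) (right_ne_zero_of_mul h) i hi
        exact ⟨u, List.mem_cons_of_mem _ hu, v, List.mem_cons_of_mem _ hv, huv⟩
      · refine ⟨x, by simp, y, by simp, fun he => left_ne_zero_of_mul h ?_⟩
        rw [he, zmod2]

lemma prL_mem (φ ψ : X → X) (l : List X) :
    prL φ ψ l ∈ Sp {m | m.length = l.length + 1 ∧ ∀ x ∈ m, ∃ y ∈ l, x = φ y ∨ x = ψ y} := by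
  induction l with
  | nil => simp [prL]
  | cons a l ih =>
    rw [prL]
    refine Submodule.add_mem _ (gen_mem ?_) ?_
    · simp only [Set.mem_ofPred_eq, List.length_cons, List.length_map, List.mem_cons, List.mem_map]
      refine ⟨trivial, ?_⟩
      rintro x (rfl | rfl | ⟨y, hy, rfl⟩)
      · exact ⟨a, by simp, by simp⟩
      · exact ⟨a, by simp, by simp⟩
      · exact ⟨y, by simp [hy], by simp⟩
    · refine lin_mem (f := cn (φ a)) (fun m hm => ?_) ih
      rw [cn_gen]
      refine gen_mem ?_
      obtain ⟨h1, h2⟩ := hm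
      refine ⟨by simp [h1], ?_⟩
      intro x hx
      rcases List.mem_cons.mp hx with rfl | hx
      · exact ⟨a, by simp, by simp⟩
      · obtain ⟨y, hy, h⟩ := h2 x hx
        exact ⟨y, by simp [hy], h⟩

/-- Small lists on the `k`-dimensional subsphere of the sup-norm sphere. -/
def Small (N k : ℕ) (δ : ℝ) : Set (List (Fin N → ℝ)) :=
  {l | l.length = k + 1 ∧ (∀ x ∈ l, ‖x‖ = 1 ∧ ∀ j : Fin N, k < j.1 → x j = 0) ∧
    ∀ x ∈ l, ∀ y ∈ l, dist x y < δ}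

/-- The contraction of a subsphere to a pole. -/
noncomputable def ctr {N : ℕ} (e : Fin N → ℝ) (M t : ℕ) (x : Fin N → ℝ) : Fin N → ℝ :=
  (min 1 (2 - 2 * (t / M : ℝ))) • x + (min 1 (2 * (t / M : ℝ))) • e

lemma ctr_norm {N : ℕ} (p : Fin N) (M t : ℕ) (ht : t ≤ M) (x : Fin N → ℝ)
    (hx : ‖x‖ = 1) (hp : x p = 0) : ‖ctr (Pi.single p 1) M t x‖ = 1 := by
  have hτ0 : (0:ℝ) ≤ t / M := by positivity
  have hτ1 : (t / M : ℝ) ≤ 1 := div_le_one_of_le₀ (by exact_mod_cast ht) (by positivity)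
  unfold ctr
  generalize (t / M : ℝ) = τ at *
  have hxj : ∀ j, |x j| ≤ 1 := fun j => by rw [← hx]; exact norm_le_pi_norm x j
  apply le_antisymm
  · rw [pi_norm_le_iff_of_nonneg (by norm_num)]
    intro j
    rw [Real.norm_eq_abs]
    by_cases hj : j = p
    · subst hj
      simp only [Pi.add_apply, Pi.smul_apply, hp, smul_eq_mul, Pi.single_eq_same]
      rw [abs_le]; constructor
      · have : 0 ≤ min 1 (2 * τ) := by positivity
        linarith
      · linarith [min_le_left 1 (2 * τ)]
    · simp only [Pi.add_apply, Pi.smul_apply, smul_eq_mul, Pi.single_eq_of_ne hj, mul_zero, add_zero]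
      rw [abs_mul]
      have h0 : 0 ≤ min 1 (2 - 2 * τ) := le_min (by norm_num) (by linarith)
      rw [abs_of_nonneg h0]
      exact mul_le_one₀ (min_le_left _ _) (abs_nonneg _) (hxj j)
  · rcases le_total τ (1/2) with h | h
    · have : Nonempty (Fin N) := ⟨p⟩
      obtain ⟨j, hj⟩ : ∃ j, 1 ≤ |x j| := by
        by_contra hcon
        push Not at hcon
        have := (pi_norm_lt_iff (x := x) (r := 1) (by norm_num)).2 hcon
        linarith
      have hjp : j ≠ p := by rintro rfl; rw [hp] at hj; norm_num at hj
      refine le_trans ?_ (norm_le_pi_norm _ j)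
      rw [min_eq_left (by linarith : (1:ℝ) ≤ 2 - 2 * τ)]
      simpa [Pi.single_eq_of_ne hjp] using hj
    · refine le_trans ?_ (norm_le_pi_norm _ p)
      rw [min_eq_left (by linarith : (1:ℝ) ≤ 2 * τ)]
      simp [hp]

lemma ctr_dist {N : ℕ} (p : Fin N) (M t t' : ℕ) (hM : 0 < M) (ht : t ≤ M) (ht' : t' ≤ M)
    (hd : |(t:ℝ) - t'| ≤ 1) (x y : Fin N → ℝ)
    (hx : ‖x‖ = 1) (hy : ‖y‖ = 1) :
    dist (ctr (Pi.single p 1) M t x) (ctr (Pi.single p 1) M t' y) ≤ dist x y + 4 / M := by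
  have hτ0 : (0:ℝ) ≤ t / M := by positivity
  have hτ1 : (t / M : ℝ) ≤ 1 := div_le_one_of_le₀ (by exact_mod_cast ht) (by positivity)
  have hτ0' : (0:ℝ) ≤ t' / M := by positivity
  have hτ1' : (t' / M : ℝ) ≤ 1 := div_le_one_of_le₀ (by exact_mod_cast ht') (by positivity)
  have hdd : |(t / M : ℝ) - t' / M| ≤ 1 / M := by
    rw [← sub_div, abs_div, abs_of_nonneg (by positivity : (0:ℝ) ≤ M)]
    gcongr
  unfold ctr
  rw [show (4:ℝ) / M = 4 * (1 / M) by ring]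
  generalize (t / M : ℝ) = τ at *
  generalize (t' / M : ℝ) = τ' at *
  generalize (1 / M : ℝ) = η at *
  rw [dist_eq_norm, dist_eq_norm]
  have e1 : |min 1 (2 - 2 * τ) - min 1 (2 - 2 * τ')| ≤ 2 * η := by
    refine (abs_min_sub_min_le_max _ _ _ _).trans ?_
    rw [sub_self, abs_zero, max_le_iff]
    refine ⟨by linarith [abs_nonneg (τ - τ')], ?_⟩
    rw [show 2 - 2 * τ - (2 - 2 * τ') = -(2 * (τ - τ')) by ring, abs_neg, abs_mul]
    norm_num; exact hdd
  have e2 : |min 1 (2 * τ) - min 1 (2 * τ')| ≤ 2 * η := by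
    refine (abs_min_sub_min_le_max _ _ _ _).trans ?_
    rw [sub_self, abs_zero, max_le_iff]
    refine ⟨by linarith [abs_nonneg (τ - τ')], ?_⟩
    rw [show 2 * τ - 2 * τ' = (2 * (τ - τ')) by ring, abs_mul]
    norm_num; exact hdd
  have h0 : 0 ≤ min 1 (2 - 2 * τ) := le_min (by norm_num) (by linarith)
  have h1 : min 1 (2 - 2 * τ) ≤ 1 := min_le_left _ _
  generalize min 1 (2 - 2 * τ) = a at *
  generalize min 1 (2 - 2 * τ') = a' at *
  generalize min 1 (2 * τ) = b at *
  generalize min 1 (2 * τ') = b' at *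
  have : a • x + b • (Pi.single p 1 : Fin N → ℝ) - (a' • y + b' • Pi.single p 1)
      = a • (x - y) + (a - a') • y + (b - b') • Pi.single p 1 := by module
  rw [this]
  refine (norm_add₃_le).trans ?_
  rw [norm_smul, norm_smul, norm_smul, hy, Real.norm_eq_abs, Real.norm_eq_abs, Real.norm_eq_abs,
    abs_of_nonneg h0]
  have : ‖(Pi.single p 1 : Fin N → ℝ)‖ = 1 := single_norm p
  rw [this]
  have := mul_le_mul_of_nonneg_right h1 (norm_nonneg (x - y))
  linarith

lemma exists_chain (N k : ℕ) (hk : k < N) (δ : ℝ) (hδ : 0 < δ) :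
    ∃ h : Ch (Fin N → ℝ), h ∈ Sp (Small N k δ) ∧ bd (h + mp (fun x => -x) h) = 0 ∧
      ∀ s : ℕ → (Fin N → ℝ) → ZMod 2, (∀ i x, ‖x‖ = 1 → s i (-x) = s i x + 1) →
        ev (W s k) h = 1 := by
  induction k generalizing δ with
  | zero =>
    refine ⟨gen [Pi.single ⟨0, hk⟩ 1], gen_mem ?_, ?_, ?_⟩
    · refine ⟨rfl, ?_, ?_⟩
      · simp only [List.mem_singleton, forall_eq]
        refine ⟨single_norm _, fun j hj => ?_⟩
        apply Pi.single_eq_of_ne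
        rintro rfl
        simp at hj
      · simp [hδ]
    · simp [bdL, ch_add_self]
    · intro s _
      simp [W]
  | succ k ih =>
    obtain ⟨h, hS, hb, hW⟩ := ih (by omega) (δ / 2) (by positivity)
    obtain ⟨M, hM⟩ := exists_nat_gt (8 / δ)
    have hM0 : (0:ℝ) < M := lt_trans (by positivity) hM
    have hM0' : 0 < M := by exact_mod_cast hM0
    have hMδ : 4 / (M:ℝ) < δ / 2 := by
      rw [div_lt_iff₀ hδ] at hM
      rw [div_lt_iff₀ hM0]; linarith
    set p : Fin N := ⟨k+1, hk⟩ with hp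
    set φ := ctr (Pi.single p (1:ℝ)) M with hφ
    set T : (Fin N → ℝ) → (Fin N → ℝ) := fun x => -x with hT
    set c := h + mp T h with hc
    have hTT : mp T (mp T h) = h := by
      rw [mp_mp]
      have : T ∘ T = fun x => x := by ext; simp [hT]
      rw [this, mp_id]
    have hTc : mp T c = c := by rw [hc, map_add, hTT, add_comm]
    have hbd : bd (∑ t ∈ Finset.range M, pr (φ t) (φ (t+1)) c) = c := by
      rw [prism_sum φ c hb M]
      have h0 : φ 0 = fun x => x := by ext x; simp [hφ, ctr]
      have h1 : φ M ∘ T = φ M := by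
        ext x; simp [hφ, ctr, hM0.ne']
      rw [h0, mp_id]
      have : mp (φ M) c = 0 := by rw [hc, map_add, mp_mp, h1, ch_add_self]
      rw [this, add_zero]
    have hcS : c ∈ Sp (Small N k (δ/2)) := by
      refine Submodule.add_mem _ hS (lin_mem (f := mp T) (fun l hl => ?_) hS)
      rw [mp_gen]
      refine gen_mem ?_
      obtain ⟨h1, h2, h3⟩ := hl
      refine ⟨by simpa using h1, ?_, ?_⟩
      · intro x hx
        obtain ⟨y, hy, rfl⟩ := List.mem_map.mp hx
        simpa [hT] using h2 y hy
      · intro x hx x' hx'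
        obtain ⟨y, hy, rfl⟩ := List.mem_map.mp hx
        obtain ⟨y', hy', rfl⟩ := List.mem_map.mp hx'
        simpa [hT] using h3 y hy y' hy'
    have hS' : (∑ t ∈ Finset.range M, pr (φ t) (φ (t+1)) c) ∈ Sp (Small N (k+1) δ) := by
      refine Submodule.sum_mem _ fun t ht => ?_
      have htM : t + 1 ≤ M := Finset.mem_range.mp ht
      refine lin_mem (f := pr (φ t) (φ (t+1))) (fun l hl => ?_) hcS
      rw [pr_gen]
      refine Finsupp.supported_mono ?_ (prL_mem _ _ l)
      obtain ⟨h1, h2, h3⟩ := hl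
      rintro m ⟨hm1, hm2⟩
      have key : ∀ x ∈ m, ∃ y ∈ l, ∃ t', (t' = t ∨ t' = t+1) ∧ x = φ t' y := by
        intro x hx
        obtain ⟨y, hy, h | h⟩ := hm2 x hx
        · exact ⟨y, hy, t, Or.inl rfl, h⟩
        · exact ⟨y, hy, t+1, Or.inr rfl, h⟩
      refine ⟨by rw [hm1, h1], ?_, ?_⟩
      · intro x hx
        obtain ⟨y, hy, t', ht', rfl⟩ := key x hx
        obtain ⟨hy1, hy2⟩ := h2 y hy
        refine ⟨ctr_norm p M t' (by omega) y hy1 (hy2 p (by simp [hp])), fun j hj => ?_⟩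
        have hjp : j ≠ p := by rintro rfl; simp [hp] at hj
        simp [hφ, ctr, Pi.single_eq_of_ne hjp, hy2 j (by omega)]
      · intro x hx x' hx'
        obtain ⟨y, hy, t', ht', rfl⟩ := key x hx
        obtain ⟨z, hz, t'', ht'', rfl⟩ := key x' hx'
        have hd : |(t':ℝ) - t''| ≤ 1 := by
          rcases ht' with rfl | rfl <;> rcases ht'' with rfl | rfl <;> simp
        have := ctr_dist p M t' t'' hM0' (by omega) (by omega) hd y z (h2 y hy).1 (h2 z hz).1
        have := h3 y hy z hz
        simp only [hφ]
        linarith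
    refine ⟨_, hS', ?_, ?_⟩
    · rw [map_add, bd_mp, hbd, hTc, ch_add_self]
    · intro s hs
      have e1 : ev (W s (k+1)) (∑ t ∈ Finset.range M, pr (φ t) (φ (t+1)) c)
          = (ev (al s k)).comp bd (∑ t ∈ Finset.range M, pr (φ t) (φ (t+1)) c) := by
        refine lin_eq (fun l hl => ?_) hS'
        simp [al_cobd s k l hl.1]
      rw [e1, LinearMap.comp_apply, hbd, hc, ← hW s hs]
      refine lin_eq (f := ev (al s k) ∘ₗ (LinearMap.id + mp T)) (g := ev (W s k)) (fun l hl => ?_) hS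
      simp only [LinearMap.comp_apply, LinearMap.add_apply, LinearMap.id_apply, map_add, mp_gen, ev_gen]
      exact al_neg s T k l hl.1 (fun i x hx => hs i x (hl.2.1 x hx).1)

lemma exists_odd_aux (A : Type*) [AddCommGroup A] [LinearOrder A] [IsOrderedAddMonoid A] :
    ∃ q : A → ZMod 2, ∀ x, x ≠ 0 → q (-x) = q x + 1 := by
  classical
  refine ⟨fun x => if 0 < x then 1 else 0, fun x hx => ?_⟩
  have h2 : (1 + 1 : ZMod 2) = 0 := by decide
  rcases lt_or_gt_of_ne hx with h' | h'
  · simp [h', not_lt.mpr h'.le]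
  · simp [h', not_lt.mpr h'.le, h2]

lemma exists_odd (N : ℕ) : ∃ q : (Fin N → ℝ) → ZMod 2, ∀ x, x ≠ 0 → q (-x) = q x + 1 := by
  obtain ⟨q, hq⟩ := exists_odd_aux (Lex (Fin N → ℝ))
  exact ⟨fun x => q (toLex x), fun x hx => hq (toLex x) (fun h0 => hx h0)⟩

/-- Borsuk–Ulam for the sup-norm sphere. -/
theorem borsuk_ulam {N d : ℕ} (hd : d < N) (f : (Fin N → ℝ) → (Fin d → ℝ)) (hf : Continuous f)
    (hodd : ∀ x, f (-x) = - f x) : ∃ x, ‖x‖ = 1 ∧ f x = 0 := by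
  by_contra hcon
  push Not at hcon
  have hK : IsCompact (Metric.sphere (0 : Fin N → ℝ) 1) := isCompact_sphere _ _
  have hne : (Metric.sphere (0 : Fin N → ℝ) 1).Nonempty :=
    ⟨Pi.single ⟨d, hd⟩ 1, by rw [mem_sphere_zero_iff_norm]; exact single_norm _⟩
  obtain ⟨x0, hx0, hmin⟩ := hK.exists_isMinOn hne (hf.norm.continuousOn)
  have hc : 0 < ‖f x0‖ := norm_pos_iff.mpr (hcon x0 (by simpa using hx0))
  obtain ⟨δ, hδ, hu⟩ := Metric.uniformContinuousOn_iff.mp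
    (hK.uniformContinuousOn_of_continuous hf.continuousOn) ‖f x0‖ hc
  obtain ⟨h, hS, -, hW⟩ := exists_chain N d hd δ hδ
  classical
  let g : ℕ → (Fin N → ℝ) → ℝ := fun i x => if hi : i < d then f x ⟨i, hi⟩ else 0
  have hg : ∀ i x, g i (-x) = - g i x := by
    intro i x; simp only [g]; split_ifs <;> simp [hodd]
  obtain ⟨q, hq⟩ := exists_odd N
  let s : ℕ → (Fin N → ℝ) → ZMod 2 := fun i x =>
    if 0 < g i x then 1 else if g i x < 0 then 0 else q x
  have hs : ∀ i x, ‖x‖ = 1 → s i (-x) = s i x + 1 := by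
    intro i x hx
    have h2 : (1 + 1 : ZMod 2) = 0 := by decide
    simp only [s, hg]
    rcases lt_trichotomy (g i x) 0 with h | h | h
    · simp [h, not_lt.mpr h.le]
    · have hx0 : x ≠ 0 := by
        rintro rfl
        simp at hx
      simp [h, hq x hx0]
    · simp [h, not_lt.mpr h.le, h2]
  have h1 := hW s hs
  have h0 : ev (W s d) h = (0 : Ch (Fin N → ℝ) →ₗ[ZMod 2] ZMod 2) h := by
    refine lin_eq (fun l hl => ?_) hS
    rw [ev_gen, LinearMap.zero_apply]
    by_contra hne
    obtain ⟨hl1, hl2, hl3⟩ := hl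
    obtain ⟨a, ha⟩ : ∃ a, a ∈ l := List.exists_mem_of_length_pos (by omega)
    have hsph : ∀ x ∈ l, x ∈ Metric.sphere (0 : Fin N → ℝ) 1 := fun x hx => by
      simpa using (hl2 x hx).1
    have hac : ‖f x0‖ ≤ ‖f a‖ := hmin (hsph a ha)
    obtain ⟨i, hi⟩ : ∃ i, ‖f x0‖ ≤ |f a i| := by
      by_contra hcon
      push Not at hcon
      have := (pi_norm_lt_iff (x := f a) hc).2 hcon
      linarith
    have hsame : ∀ x ∈ l, s i x = if 0 < f a i then 1 else 0 := by
      intro x hx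
      have hdd := hu x (hsph x hx) a (hsph a ha) (hl3 x hx a ha)
      have hdi := (dist_le_pi_dist (f x) (f a) i).trans_lt hdd
      rw [Real.dist_eq] at hdi
      have hgi : g i x = f x i := by simp [g]
      simp only [s, hgi]
      rcases le_total 0 (f a i) with h' | h'
      · rw [abs_of_nonneg h'] at hi
        have h3 : 0 < f x i := by linarith [(abs_lt.mp hdi).1]
        have h4 : 0 < f a i := by linarith
        simp [h3, h4]
      · rw [abs_of_nonpos h'] at hi
        have h3 : f x i < 0 := by linarith [(abs_lt.mp hdi).2]
        simp [h3, not_lt.mpr h3.le, not_lt.mpr h']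
    obtain ⟨x, hx, y, hy, hxy⟩ := W_ne s d l hne i i.2
    exact hxy (by rw [hsame x hx, hsame y hy])
  rw [h1] at h0
  simp at h0

end TripodBU

namespace TripodBU

/-- Auxiliary coordinate of the map from `ℝ³` to the tripod. -/
noncomputable def gc (w : Fin 3 → ℝ) (i : Fin 3) : ℝ :=
  min 1 (max 0 (w i - max 0 (max (w (i + 1)) (w (i + 2)))))

lemma gc_pos {w : Fin 3 → ℝ} {i : Fin 3} (h : gc w i ≠ 0) :
    w (i + 1) < w i ∧ w (i + 2) < w i := by
  by_contra hc
  apply h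
  have : w i - max 0 (max (w (i + 1)) (w (i + 2))) ≤ 0 := by
    rw [not_and_or, not_lt, not_lt] at hc
    have h1 := le_max_right 0 (max (w (i + 1)) (w (i + 2)))
    rcases hc with hc | hc
    · linarith [le_max_left (w (i + 1)) (w (i + 2))]
    · linarith [le_max_right (w (i + 1)) (w (i + 2))]
  rw [gc, max_eq_left this]
  norm_num

lemma gc_mem (w : Fin 3 → ℝ) : gc w ∈ TripodSet := by
  refine ⟨fun i => ⟨by unfold gc; positivity, min_le_left _ _⟩, fun i j hij => ?_⟩
  by_contra hc
  push Not at hc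
  have h1 := gc_pos hc.1
  have h2 := gc_pos hc.2
  fin_cases i <;> fin_cases j <;> simp at hij h1 h2 <;> linarith

noncomputable def gT (w : Fin 3 → ℝ) : TripodSet := ⟨gc w, gc_mem w⟩

lemma gT_cont : Continuous gT := by
  unfold gT gc
  refine Continuous.subtype_mk ?_ _
  fun_prop

lemma gc_one {w : Fin 3 → ℝ} {i : Fin 3} (h : 1 ≤ w i) (h1 : w (i + 1) ≤ 0) (h2 : w (i + 2) ≤ 0) :
    gc w i = 1 ∧ gc (-w) i = 0 := by
  constructor
  · rw [gc, max_eq_left (max_le h1 h2), sub_zero, max_eq_right (by linarith), min_eq_left h]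
  · by_contra hc
    have := (gc_pos hc).1
    simp only [Pi.neg_apply] at this
    linarith

lemma dist_one {w : Fin 3 → ℝ} {i : Fin 3} (h : 1 ≤ w i) (h1 : w (i + 1) ≤ 0)
    (h2 : w (i + 2) ≤ 0) : 1 ≤ tripodDist (gT w) (gT (-w)) := by
  obtain ⟨ha, hb⟩ := gc_one h h1 h2
  have := Finset.single_le_sum (f := fun j => |gc w j - gc (-w) j|)
    (fun j _ => abs_nonneg _) (Finset.mem_univ i)
  simp only [ha, hb] at this
  unfold tripodDist gT
  simpa using this

lemma dist_symm (x y : TripodSet) : tripodDist x y = tripodDist y x := by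
  unfold tripodDist
  exact Finset.sum_congr rfl fun i _ => abs_sub_comm _ _

lemma dist_one' {w : Fin 3 → ℝ} {i : Fin 3} (h : w i ≤ -1) (h1 : 0 ≤ w (i + 1))
    (h2 : 0 ≤ w (i + 2)) : 1 ≤ tripodDist (gT w) (gT (-w)) := by
  rw [dist_symm]
  have := dist_one (w := -w) (i := i) (by simp; linarith) (by simpa using h1) (by simpa using h2)
  simpa using this

lemma dist_pair (u v : ℝ) (h : 1 ≤ |u| ∨ 1 ≤ |v|) :
    1 ≤ tripodDist (gT ![u, v, -u - v]) (gT (-![u, v, -u - v])) := by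
  have hp : (0 ≤ u ∧ 0 ≤ v ∧ 1 ≤ u + v) ∨ (u ≤ 0 ∧ v ≤ 0 ∧ u + v ≤ -1) ∨
      (0 ≤ u ∧ v ≤ 0 ∧ 0 ≤ u + v ∧ 1 ≤ u) ∨ (0 ≤ u ∧ v ≤ 0 ∧ u + v ≤ 0 ∧ v ≤ -1) ∨
      (u ≤ 0 ∧ 0 ≤ v ∧ 0 ≤ u + v ∧ 1 ≤ v) ∨ (u ≤ 0 ∧ 0 ≤ v ∧ u + v ≤ 0 ∧ u ≤ -1) := by
    rcases le_total 0 u with hu | hu <;> rcases le_total 0 v with hv | hv <;>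
      rcases le_total 0 (u + v) with huv | huv <;>
      simp only [abs_of_nonneg, abs_of_nonpos, hu, hv] at h <;>
      grind
  rcases hp with ⟨a, b, c⟩ | ⟨a, b, c⟩ | ⟨a, b, c, d⟩ | ⟨a, b, c, d⟩ | ⟨a, b, c, d⟩ | ⟨a, b, c, d⟩
  · exact dist_one' (i := 2) (by simp; linarith) (by simpa using a) (by simpa using b)
  · exact dist_one (i := 2) (by simp; linarith) (by simpa using a) (by simpa using b)
  · exact dist_one (i := 0) (by simpa using d) (by simpa using b) (by simp; linarith)
  · exact dist_one' (i := 1) (by simpa using d) (by simp; linarith) (by simpa using a)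
  · exact dist_one (i := 1) (by simpa using d) (by simp; linarith) (by simpa using a)
  · exact dist_one' (i := 0) (by simpa using d) (by simpa using b) (by simp; linarith)

/-- The three linear forms attached to the `i`-th pair of coordinates. -/
def wv {n : ℕ} (z : Fin (2 * n) → ℝ) (i : Fin n) : Fin 3 → ℝ :=
  ![z ⟨2 * i.1, by omega⟩, z ⟨2 * i.1 + 1, by omega⟩,
    - z ⟨2 * i.1, by omega⟩ - z ⟨2 * i.1 + 1, by omega⟩]

lemma wv_neg {n : ℕ} (z : Fin (2 * n) → ℝ) (i : Fin n) : wv (-z) i = - wv z i := by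
  ext j
  fin_cases j <;> simp [wv] <;> ring

lemma wv_cont {n : ℕ} (i : Fin n) : Continuous fun z : Fin (2 * n) → ℝ => wv z i := by
  refine continuous_pi fun j => ?_
  fin_cases j <;> simp [wv] <;> fun_prop

noncomputable def GG {n : ℕ} (z : Fin (2 * n) → ℝ) : Fin n → TripodSet := fun i => gT (wv z i)

lemma GG_cont {n : ℕ} : Continuous (GG (n := n)) :=
  continuous_pi fun i => gT_cont.comp (wv_cont i)

lemma GG_dist {n : ℕ} (hn : 0 < n) (z : Fin (2 * n) → ℝ) (hz : ‖z‖ = 1) :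
    1 ≤ tripodDistInf (GG z) (GG (-z)) := by
  obtain ⟨j, hj⟩ : ∃ j, 1 ≤ |z j| := by
    by_contra hcon
    push Not at hcon
    have := (pi_norm_lt_iff (x := z) (r := 1) (by norm_num)).2 hcon
    linarith
  have hi : j.1 / 2 < n := by omega
  have h1 : 1 ≤ tripodDist (GG z ⟨j.1 / 2, hi⟩) (GG (-z) ⟨j.1 / 2, hi⟩) := by
    unfold GG
    rw [wv_neg]
    unfold wv
    apply dist_pair
    rcases Nat.mod_two_eq_zero_or_one j.1 with h | h
    · left
      have : (⟨2 * (j.1 / 2), by omega⟩ : Fin (2 * n)) = j := Fin.ext (by simp; omega)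
      rw [this]; exact hj
    · right
      have : (⟨2 * (j.1 / 2) + 1, by omega⟩ : Fin (2 * n)) = j := Fin.ext (by simp; omega)
      rw [this]; exact hj
  exact h1.trans (le_csSup (Set.finite_range _).bddAbove ⟨_, rfl⟩)

end TripodBU

/-- **Lemma (used in Part 4).** For every `ε ∈ (0,1)`, every `n ≥ 1` and every finite index
set `ι` with `|ι| ≤ 2n - 1`, there is no `ε`-embedding of `(P^n, d_{l^∞})` into `[0,1]^ι`,
where `P` is the tripod with the graph distance. -/
theorem tripod_power_no_eps_embedding_into_cube (ε : ℝ) (hε0 : 0 < ε) (hε1 : ε < 1)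
    (n : ℕ) (hn : 0 < n) (ι : Type*) [Fintype ι] (hcard : Fintype.card ι ≤ 2 * n - 1) :
    ¬ ∃ f : (Fin n → ↥TripodSet) → (ι → Set.Icc (0 : ℝ) 1),
        Continuous f ∧ ∀ x y, f x = f y → tripodDistInf x y < ε := by
  rintro ⟨f, hf, hinj⟩
  let e := Fintype.equivFin ι
  let F : (Fin (2 * n) → ℝ) → (Fin (Fintype.card ι) → ℝ) := fun z j =>
    (f (TripodBU.GG z) (e.symm j) : ℝ) - (f (TripodBU.GG (-z)) (e.symm j) : ℝ)
  have hF : Continuous F := by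
    have h1 : Continuous fun z : Fin (2 * n) → ℝ => f (TripodBU.GG z) := hf.comp TripodBU.GG_cont
    have h2 : Continuous fun z : Fin (2 * n) → ℝ => f (TripodBU.GG (-z)) := h1.comp continuous_neg
    refine continuous_pi fun j => ?_
    exact (continuous_subtype_val.comp ((continuous_apply _).comp h1)).sub
      (continuous_subtype_val.comp ((continuous_apply _).comp h2))
  obtain ⟨z, hz, hz0⟩ := TripodBU.borsuk_ulam (by omega) F hF (fun x => by
    ext j; simp [F])
  have heq : f (TripodBU.GG z) = f (TripodBU.GG (-z)) := by
    ext i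
    have := congrFun hz0 (e i)
    simp only [F, Equiv.symm_apply_apply, Pi.zero_apply] at this
    linarith
  have := hinj _ _ heq
  have := TripodBU.GG_dist hn z hz
  linarith
end
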